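/- arXiv:2503.18691 — 3 statements merged into one kernel-verified Lean document; each statement's English description precedes it below -/
import Mathlib

section
/- For any m ∈ ℕ, any b ∈ ℝ^m, and any n ∈ ℕ, the set {x♯b : x ∈ ℝ^n} ⊆ ℝ^{n+m} is gap-rich; in fact, it is gap-rich with exceptional set the finite set S = {E ∈ ℝ : the (1,1) entry of T(0^{♯(n−1)}♯b, E) vanishes}. -/
/-!
Three facts carry the theorem.

*Floquet criterion* (`not_mem_spectrum`). If `v` is `q`-periodic and the trace `τ` of the
transfer matrix over a period satisfies `|τ| > 2`, then `E ∉ σ(Δ + v)`. Variation of constants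
(`exists_duhamel`) and unimodularity of the transfer matrices give a bounded operator
`L` with `L (H - E) = S^q + S^{-q} - τ`, where `S` is the shift. Since `‖S^q + S^{-q}‖ ≤ 2 < |τ|`,
the right side is invertible, so `H - E` has a left inverse; being self-adjoint, it is invertible.

*Hyperbolic products* (`exists_hyperbolic_product`). If `P ∈ SL(2,ℝ)` has `P₀₀ ≠ 0`, then for each
`c` and `δ > 0` some product of matrices `F(a) = P · T(c + a, E)` with `|a| < δ` has `|tr| > 2`. The
trace is affine in `a` with slope `-P₀₀`, so either a single factor is hyperbolic or the traces fill
an interval in `[-2, 2]`. In the latter case some `F(a₁)` is conjugate to a rational rotation, hence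
of finite order `N`, and `F(a₁)^(N-1) F(a₂)` is a nontrivial unipotent matrix; multiplying `F(a₁)`
by its `k`-th power gives `F(a₁ + k (a₂ - a₁))`, whose trace is unbounded in `k`.

*Generic words* (`exists_good_word_near`). If `E` is not exceptional, every word over `{x♯b}` is
approximated by words `ξ` for which the transfer matrix `P` over all sites but the first has
`P₀₀ ≠ 0`. Indeed `P₀₀` is a polynomial along the segment from the given word to a word with
blocks `(t, 0, …, 0)♯b`, and for a suitable choice of the letters `t` it does not vanish at the end
point (`exists_good_word`), since the factor `T(0^{♯(n-1)}♯b, E)₀₀` is nonzero.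

Given a word, one passes to a nearby generic `ξ` and concatenates copies of `ξ` whose first letters
are shifted by the numbers `a` from the second fact; the trace over the period is then `> 2` in
absolute value. Finiteness of the exceptional set holds because the `(0,0)` entry is a monic
polynomial in `E`.
-/

open Set MeasureTheory BoundedContinuousFunction

noncomputable section

/-- ℓ²(ℤ; ℝ). -/
abbrev Ell2 : Type := lp (fun _ : ℤ => ℝ) 2

/-- Spectrum of the discrete Schrödinger operator `H_W = Δ + W` on `ℓ²(ℤ)`:
`E` lies in the spectrum iff `H_W - E` is not a linear bijection of `ℓ²(ℤ)`
(for bounded `W`, by the open mapping theorem this is equivalent to `H_W - E`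
not being boundedly invertible). -/
def SchrodingerSpectrum (W : ℤ → ℝ) : Set ℝ :=
  {E : ℝ | ¬ ∃ T : Ell2 ≃ₗ[ℝ] Ell2,
      ∀ f : Ell2, ∀ n : ℤ,
        (T f) n = f (n - 1) + f (n + 1) + (W n - E) * f n}

/-- A Cantor set of zero Hausdorff dimension: nonempty, compact, without isolated
points, with empty interior, and of Hausdorff dimension zero. -/
def IsZeroDimCantor (s : Set ℝ) : Prop :=
  s.Nonempty ∧ IsCompact s ∧ Preperfect s ∧ interior s = ∅ ∧ dimH s = 0

/-- Periodic bounded sequences. -/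
def IsPeriodicSeq {α : Type*} [PseudoMetricSpace α] (W : ℤ →ᵇ α) : Prop :=
  ∃ q : ℕ, 0 < q ∧ ∀ n : ℤ, W (n + q) = W n

/-- The limit-periodic functions `ℤ → ℝ`: uniform limits of periodic functions. -/
def LPZ : Set (ℤ →ᵇ ℝ) := closure {W : ℤ →ᵇ ℝ | IsPeriodicSeq W}

/-- A subset of ℝ is discrete if it has no accumulation points. -/
def IsDiscreteSet (S : Set ℝ) : Prop := ∀ x : ℝ, ¬ AccPt x (Filter.principal S)

/-- Periodic extension `w^{♯ℤ}` of a finite word `w`. -/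
def perExt {α : Type*} [Zero α] {m : ℕ} (w : Fin m → α) : ℤ → α :=
  fun n =>
    if h : 0 < m then
      w ⟨(n % (m : ℤ)).toNat, by
        have h1 : 0 ≤ n % (m : ℤ) := Int.emod_nonneg n (by exact_mod_cast h.ne')
        have h2 : n % (m : ℤ) < (m : ℤ) := Int.emod_lt_of_pos n (by exact_mod_cast h)
        omega⟩
    else 0

/-- Aggregation `y^♮` of a sequence of blocks in `ℝ^k` into a potential `ℤ → ℝ`. -/
def agg (k : ℕ) (x : ℤ → (Fin k → ℝ)) : ℤ → ℝ :=
  fun n =>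
    if h : 0 < k then
      x (Int.fdiv n k) ⟨(n % (k : ℤ)).toNat, by
        have h1 : 0 ≤ n % (k : ℤ) := Int.emod_nonneg n (by exact_mod_cast h.ne')
        have h2 : n % (k : ℤ) < (k : ℤ) := Int.emod_lt_of_pos n (by exact_mod_cast h)
        omega⟩
    else 0

/-- `Y ⊆ ℝ^k` is gap-rich with exceptional set `S`: `S` is discrete and near any
word over `Y` there is a word over `Y` whose periodic Schrödinger operator has a
gap at any prescribed energy `E ∉ S`. -/
def GapRich (k : ℕ) (Y : Set (Fin k → ℝ)) (S : Set ℝ) : Prop :=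
  IsDiscreteSet S ∧
  ∀ E : ℝ, E ∉ S → ∀ m : ℕ, 0 < m → ∀ x : Fin m → (Fin k → ℝ), (∀ i, x i ∈ Y) →
    ∀ ε : ℝ, 0 < ε →
      ∃ l : ℕ, 0 < l ∧ ∃ y : Fin l → (Fin k → ℝ),
        (∀ i, y i ∈ Y) ∧
        (∀ j : ℤ, dist (perExt x j) (perExt y j) < ε) ∧
        E ∉ SchrodingerSpectrum (agg k (perExt y))

/-- The periodic elements of `Y^ℤ`. -/
def PerY (k : ℕ) (Y : Set (Fin k → ℝ)) : Set (ℤ →ᵇ (Fin k → ℝ)) :=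
  {x | IsPeriodicSeq x ∧ ∀ n : ℤ, x n ∈ Y}

/-- The limit-periodic elements of `Y^ℤ`: uniform limits of periodic elements. -/
def LPY (k : ℕ) (Y : Set (Fin k → ℝ)) : Set (ℤ →ᵇ (Fin k → ℝ)) := closure (PerY k Y)

/-- The one-step Schrödinger transfer matrix `T(v,E)`. -/
def Tmat (v E : ℝ) : Matrix (Fin 2) (Fin 2) ℝ := !![E - v, -1; 1, 0]

/-- Transfer matrix over a word: `T(x,E) = T(x_q,E) ⋯ T(x₁,E)`. -/
def TmatWord {q : ℕ} (x : Fin q → ℝ) (E : ℝ) : Matrix (Fin 2) (Fin 2) ℝ :=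
  ((List.ofFn fun i => Tmat (x i) E).reverse).prod


/-! ### Shift and multiplication operators on `ℓ²(ℤ)` -/

lemma memℓp_shift (k : ℤ) (f : Ell2) : Memℓp (fun n : ℤ => f (n + k)) 2 := by
  have h := (lp.memℓp f).summable (by norm_num)
  refine memℓp_gen ?_
  exact (Equiv.addRight k).summable_iff.mpr h

/-- The shift `(S_k f)(n) = f (n + k)` on `ℓ²(ℤ)`. -/
def shiftOp (k : ℤ) : Ell2 →L[ℝ] Ell2 :=
  LinearMap.mkContinuous
    { toFun := fun f => (⟨fun n : ℤ => f (n + k), memℓp_shift k f⟩ : Ell2)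
      map_add' := fun f g => rfl
      map_smul' := fun c f => rfl } 1 (by
    intro f
    refine lp.norm_le_of_tsum_le (by norm_num) (by positivity) ?_
    rw [one_mul, lp.norm_rpow_eq_tsum (by norm_num)]
    exact ((Equiv.addRight k).tsum_eq (fun n => ‖f n‖ ^ (2 : ENNReal).toReal)).le)

lemma shiftOp_apply (k : ℤ) (f : Ell2) (n : ℤ) : shiftOp k f n = f (n + k) := rfl

lemma norm_shiftOp_le (k : ℤ) : ‖shiftOp k‖ ≤ 1 :=
  LinearMap.mkContinuous_norm_le _ zero_le_one _

lemma memℓp_mul (φ : ℤ → ℝ) (C : ℝ) (h : ∀ n, |φ n| ≤ C) (f : Ell2) :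
    Memℓp (fun n : ℤ => φ n * f n) 2 := by
  refine ((lp.memℓp f).const_mul C).mono' fun n => ?_
  rw [norm_mul, norm_mul, Real.norm_eq_abs, Real.norm_eq_abs C]
  exact mul_le_mul_of_nonneg_right ((h n).trans (le_abs_self C)) (norm_nonneg _)

/-- Multiplication by the function `φ`, bounded by `C`, on `ℓ²(ℤ)`. -/
def mulOp (φ : ℤ → ℝ) (C : ℝ) (h : ∀ n, |φ n| ≤ C) : Ell2 →L[ℝ] Ell2 :=
  LinearMap.mkContinuous
    { toFun := fun f => (⟨fun n : ℤ => φ n * f n, memℓp_mul φ C h f⟩ : Ell2)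
      map_add' := fun f g => by ext n; exact mul_add _ _ _
      map_smul' := fun c f => by ext n; exact mul_left_comm _ _ _ } C (by
    intro f
    have hC : 0 ≤ C := (abs_nonneg _).trans (h 0)
    have h1 : ‖C • f‖ = C * ‖f‖ := by rw [norm_smul, Real.norm_of_nonneg hC]
    rw [← h1]
    refine lp.norm_mono (by norm_num) fun n => ?_
    change ‖φ n * f n‖ ≤ ‖C * f n‖
    rw [norm_mul, norm_mul, Real.norm_eq_abs, Real.norm_of_nonneg hC]
    exact mul_le_mul_of_nonneg_right (h n) (norm_nonneg _))

lemma mulOp_apply (φ : ℤ → ℝ) (C : ℝ) (h : ∀ n, |φ n| ≤ C) (f : Ell2) (n : ℤ) :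
    mulOp φ C h f n = φ n * f n := rfl

lemma adjoint_shiftOp (k : ℤ) : star (shiftOp k) = shiftOp (-k) := by
  symm
  rw [ContinuousLinearMap.star_eq_adjoint, ContinuousLinearMap.eq_adjoint_iff]
  intro f g
  rw [lp.inner_eq_tsum, lp.inner_eq_tsum,
    ← (Equiv.addRight k).tsum_eq (fun n => inner ℝ (shiftOp (-k) f n) (g n))]
  simp [shiftOp_apply]

lemma adjoint_mulOp (φ : ℤ → ℝ) (C : ℝ) (h : ∀ n, |φ n| ≤ C) :
    star (mulOp φ C h) = mulOp φ C h := by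
  symm
  rw [ContinuousLinearMap.star_eq_adjoint, ContinuousLinearMap.eq_adjoint_iff]
  intro f g
  rw [lp.inner_eq_tsum, lp.inner_eq_tsum]
  refine tsum_congr fun n => ?_
  simp [mulOp_apply]
  ring

/-! ### Transfer matrices along a sequence -/

/-- The product `T_{n+j-1} ⋯ T_n` of `j` transfer matrices `T_i = !![v i, -1; 1, 0]`. For
`v = E - W` this is the transfer matrix of the potential `W` over `[n, n + j)` at energy `E`.
The coefficients live in any commutative ring, so that `E` may be an indeterminate. -/
def transfer {R : Type*} [CommRing R] (v : ℤ → R) (n : ℤ) : ℕ → Matrix (Fin 2) (Fin 2) R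
  | 0 => 1
  | j + 1 => !![v (n + j), -1; 1, 0] * transfer v n j

section Transfer

variable {R : Type*} [CommRing R]

lemma transfer_succ (v : ℤ → R) (n : ℤ) (j : ℕ) :
    transfer v n (j + 1) = !![v (n + j), -1; 1, 0] * transfer v n j := rfl

lemma transfer_one (v : ℤ → R) (n : ℤ) : transfer v n 1 = !![v n, -1; 1, 0] := by
  simp [transfer]

lemma transfer_add (v : ℤ → R) (n : ℤ) (i j : ℕ) :
    transfer v n (i + j) = transfer v (n + i) j * transfer v n i := by
  induction j with
  | zero => simp [transfer]
  | succ j ih =>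
    rw [← add_assoc, transfer_succ, ih, transfer_succ, Matrix.mul_assoc]
    push_cast
    rw [add_assoc]

lemma transfer_congr (v w : ℤ → R) (n n' : ℤ) (j : ℕ) (h : ∀ i < j, v (n + i) = w (n' + i)) :
    transfer v n j = transfer w n' j := by
  induction j with
  | zero => rfl
  | succ j ih =>
    rw [transfer_succ, transfer_succ, h j (by omega), ih fun i hi => h i (by omega)]

lemma det_transfer (v : ℤ → R) (n : ℤ) (j : ℕ) : (transfer v n j).det = 1 := by
  induction j with
  | zero => simp [transfer]
  | succ j ih => rw [transfer_succ, Matrix.det_mul, ih]; simp [Matrix.det_fin_two]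

lemma transfer_map {R' : Type*} [CommRing R'] (φ : R →+* R') (v : ℤ → R) (n : ℤ) (j : ℕ) :
    φ.mapMatrix (transfer v n j) = transfer (fun i => φ (v i)) n j := by
  induction j with
  | zero => simp [transfer]
  | succ j ih =>
    rw [transfer_succ, transfer_succ, map_mul, ih]
    congr 1
    ext a b
    fin_cases a <;> fin_cases b <;> simp

lemma transfer_succ_top (v : ℤ → R) (n : ℤ) (j : ℕ) (c : Fin 2) :
    transfer v n (j + 1) 0 c = v (n + j) * transfer v n j 0 c - transfer v n j 1 c := by
  rw [transfer_succ]
  simp [Matrix.mul_apply, Fin.sum_univ_two]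
  ring

lemma transfer_succ_bot (v : ℤ → R) (n : ℤ) (j : ℕ) (c : Fin 2) :
    transfer v n (j + 1) 1 c = transfer v n j 0 c := by
  rw [transfer_succ]
  simp [Matrix.mul_apply, Fin.sum_univ_two]

lemma transfer_periodic (v : ℤ → R) (q : ℕ) (hv : ∀ n, v (n + q) = v n) (n : ℤ) (j : ℕ) :
    transfer v (n + q) j = transfer v n j :=
  transfer_congr _ _ _ _ _ fun i _ => by rw [add_right_comm, hv]

/-- Over a full period the transfer matrices at `n + 1` and at `n` are conjugate. -/
lemma trace_transfer_succ (v : ℤ → R) (q : ℕ) (hv : ∀ n, v (n + q) = v n) (n : ℤ) :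
    (transfer v (n + 1) q).trace = (transfer v n q).trace := by
  have h1 := transfer_add v n 1 q
  have h2 := transfer_add v n q 1
  rw [add_comm 1 q, h2, transfer_periodic v q hv] at h1
  have hdet : IsUnit (transfer v n 1) := by
    rw [Matrix.isUnit_iff_isUnit_det, det_transfer]; exact isUnit_one
  obtain ⟨u, hu⟩ := hdet
  rw [← hu] at h1
  have h3 : transfer v (n + 1) q = (u : Matrix (Fin 2) (Fin 2) R) * transfer v n q * (u⁻¹ : (Matrix (Fin 2) (Fin 2) R)ˣ) := by
    rw [Units.eq_mul_inv_iff_mul_eq]; simpa using h1.symm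
  rw [h3, Matrix.trace_mul_comm, ← Matrix.mul_assoc, Units.inv_mul, Matrix.one_mul]

lemma trace_transfer (v : ℤ → R) (q : ℕ) (hv : ∀ n, v (n + q) = v n) (n : ℤ) :
    (transfer v n q).trace = (transfer v 0 q).trace := by
  induction n using Int.induction_on with
  | zero => rfl
  | succ i ih => rw [trace_transfer_succ v q hv, ih]
  | pred i ih =>
    rw [← ih, ← trace_transfer_succ v q hv (-i - 1), sub_add_cancel]

end Transfer

/-! ### Hyperbolic periods produce gaps -/

lemma periodic_bdd (φ : ℤ → ℝ) (q : ℕ) (hq : 0 < q) (h : ∀ n, φ (n + q) = φ n) :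
    ∃ C, ∀ n, |φ n| ≤ C := by
  refine ⟨∑ i ∈ Finset.range q, |φ i|, fun n => ?_⟩
  have hp : Function.Periodic φ (q : ℤ) := h
  have h1 : φ n = φ (n % q) := by
    conv_lhs => rw [← Int.emod_add_mul_ediv n q, mul_comm]
    exact hp.int_mul _ _
  have h0 : 0 ≤ n % (q : ℤ) := Int.emod_nonneg _ (by omega)
  have h2 : n % (q : ℤ) < q := Int.emod_lt_of_pos _ (by omega)
  obtain ⟨r, hr⟩ := Int.eq_ofNat_of_zero_le h0
  rw [h1, hr]
  exact Finset.single_le_sum (f := fun i : ℕ => |φ i|) (fun i _ => abs_nonneg _)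
    (Finset.mem_range.mpr (by omega))

/-- Variation of constants: for a bounded `v` and `A = S + S⁻¹ - v`, the value `f (n + j)` is
given by the transfer matrix applied to `(f n, f (n - 1))`, up to a bounded operator applied
to `A f`. -/
lemma exists_duhamel (v : ℤ → ℝ) (C : ℝ) (hC : ∀ n, |v n| ≤ C) (A : Ell2 →L[ℝ] Ell2)
    (hA : ∀ f n, A f n = f (n - 1) + f (n + 1) - v n * f n) (j : ℕ) :
    (∃ K : Ell2 →L[ℝ] Ell2, ∀ f n,
      f (n + j) = transfer v n j 0 0 * f n + transfer v n j 0 1 * f (n - 1) + K (A f) n) ∧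
    (∃ K : Ell2 →L[ℝ] Ell2, ∀ f n,
      f (n + j - 1) = transfer v n j 1 0 * f n + transfer v n j 1 1 * f (n - 1) + K (A f) n) := by
  induction j with
  | zero => exact ⟨⟨0, fun f n => by simp [transfer]⟩, ⟨0, fun f n => by simp [transfer]⟩⟩
  | succ j ih =>
    obtain ⟨⟨K, hK⟩, ⟨K', hK'⟩⟩ := ih
    constructor
    · refine ⟨shiftOp j + mulOp (fun n => v (n + j)) C (fun n => hC _) * K - K', fun f n => ?_⟩
      have h1 := hA f (n + j)
      have h2 := hK f n
      have h3 := hK' f n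
      change f (n + ((j + 1 : ℕ) : ℤ)) = _ + (A f (n + j) + v (n + j) * K (A f) n - K' (A f) n)
      have e : n + ((j + 1 : ℕ) : ℤ) = n + j + 1 := by push_cast; ring
      rw [transfer_succ_top, transfer_succ_top, e]
      linear_combination (-1 : ℝ) * h1 + v (n + j) * h2 - h3
    · refine ⟨K, fun f n => ?_⟩
      have e : n + ((j + 1 : ℕ) : ℤ) - 1 = n + j := by push_cast; ring
      rw [transfer_succ_bot, transfer_succ_bot, ← hK f n, e]

/-- If the transfer matrix over a period of `W` at energy `E` is hyperbolic, then `E` is not in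
the spectrum: `H_W - E` is self-adjoint and divides `S^q + S^{-q} - tr` from the right, which is
invertible since `‖S^q + S^{-q}‖ ≤ 2`. -/
lemma not_mem_spectrum (W : ℤ → ℝ) (E : ℝ) (q : ℕ) (hq : 0 < q) (hW : ∀ n, W (n + q) = W n)
    (htr : 2 < |(transfer (fun n => E - W n) 0 q).trace|) : E ∉ SchrodingerSpectrum W := by
  set v : ℤ → ℝ := fun n => E - W n with hv
  have hvp : ∀ n, v (n + q) = v n := fun n => by simp [hv, hW]
  set τ := (transfer v 0 q).trace with hτ
  obtain ⟨C, hC⟩ := periodic_bdd v q hq hvp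
  set A : Ell2 →L[ℝ] Ell2 := shiftOp (-1) + shiftOp 1 - mulOp v C hC with hAdef
  have hA : ∀ f n, A f n = f (n - 1) + f (n + 1) - v n * f n := fun f n => rfl
  have hAstar : star A = A := by
    simp only [hAdef, star_sub, star_add, adjoint_shiftOp, adjoint_mulOp]
    rw [neg_neg, add_comm (shiftOp 1)]
  obtain ⟨⟨K, hK⟩, ⟨K', hK'⟩⟩ := exists_duhamel v C hC A hA q
  have hper : ∀ a b n, transfer v (n + q) q a b = transfer v n q a b := fun a b n => by
    rw [transfer_periodic v q hvp]
  have hper' : ∀ a b n, transfer v (n + -q) q a b = transfer v n q a b := fun a b n => by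
    rw [← hper, neg_add_cancel_right]
  obtain ⟨C1, hC1⟩ := periodic_bdd (fun n => transfer v n q 0 1) q hq (hper 0 1)
  obtain ⟨C2, hC2⟩ := periodic_bdd (fun n => transfer v n q 1 1) q hq (hper 1 1)
  set B : Ell2 →L[ℝ] Ell2 := shiftOp q + shiftOp (-q) with hB
  -- `S^{-q}` is obtained by inverting the unimodular transfer matrix over the preceding period.
  have key : ∃ L : Ell2 →L[ℝ] Ell2, L * A = B - τ • 1 := by
    refine ⟨K - shiftOp (-q) * (mulOp _ C2 hC2 * K - mulOp _ C1 hC1 * K'), ?_⟩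
    ext f n
    have h1 := hK f n
    have h2 := hK f (n + -q)
    have h3 := hK' f (n + -q)
    rw [neg_add_cancel_right, hper', hper'] at h2 h3
    have hd := det_transfer v n q
    have ht := trace_transfer v q hvp n
    rw [Matrix.det_fin_two] at hd
    rw [Matrix.trace_fin_two, ← hτ] at ht
    change K (A f) n - (transfer v (n + -q) q 1 1 * K (A f) (n + -q)
      - transfer v (n + -q) q 0 1 * K' (A f) (n + -q)) = f (n + q) + f (n + -q) - τ * f n
    rw [hper', hper']
    rw [h1, ← ht]
    linear_combination (transfer v n q 1 1) * h2 - (transfer v n q 0 1) * h3 + f (n + -q) * hd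
  obtain ⟨L, hL⟩ := key
  have hBn : ‖B‖ ≤ 2 := (norm_add_le _ _).trans
    (by linarith [norm_shiftOp_le (q : ℤ), norm_shiftOp_le (-q : ℤ)])
  have hτ0 : τ ≠ 0 := by rintro h; rw [h] at htr; norm_num at htr
  have hunit : IsUnit (B - τ • (1 : Ell2 →L[ℝ] Ell2)) := by
    have h1 : ‖τ⁻¹ • B‖ < 1 := by
      rw [norm_smul, norm_inv, Real.norm_eq_abs, inv_mul_lt_iff₀ (by positivity)]
      linarith
    have h2 := (isUnit_one_sub_of_norm_lt_one h1).smul (Units.mk0 (-τ) (neg_ne_zero.mpr hτ0))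
    convert h2 using 1
    rw [Units.smul_def, Units.val_mk0, smul_sub, smul_smul]
    rw [neg_mul, mul_inv_cancel₀ hτ0]
    module
  obtain ⟨u, hu⟩ := hunit
  -- A self-adjoint operator with a left inverse is invertible.
  have hleft : (↑u⁻¹ * L) * A = 1 := by rw [mul_assoc, hL, ← hu, Units.inv_mul]
  have hright : A * star (↑u⁻¹ * L) = 1 := by
    have := congrArg star hleft
    rwa [star_mul, hAstar, star_one] at this
  have hAu : IsUnit A := ⟨⟨A, _, hright, by
    rwa [← left_inv_eq_right_inv hleft hright]⟩, rfl⟩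
  have hbij : Function.Bijective A := ContinuousLinearMap.isUnit_iff_bijective.mp hAu
  intro hmem
  refine hmem ⟨LinearEquiv.ofBijective (A : Ell2 →ₗ[ℝ] Ell2) hbij, fun f n => ?_⟩
  change A f n = _
  rw [hA, hv]
  ring

/-! ### Hyperbolic products of perturbed transfer matrices -/

/-- Cayley–Hamilton in trigonometric form, for a unimodular matrix of trace `2 cos θ`. -/
lemma sin_smul_pow (M : Matrix (Fin 2) (Fin 2) ℝ) (θ : ℝ) (hdet : M.det = 1)
    (htr : M.trace = 2 * Real.cos θ) (N : ℕ) :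
    Real.sin θ • M ^ N = Real.sin (N * θ) • M - Real.sin ((N - 1) * θ) • 1 := by
  have hCH : M * M = (2 * Real.cos θ) • M - 1 := by
    rw [← htr]
    rw [Matrix.det_fin_two] at hdet
    ext i j
    fin_cases i <;> fin_cases j <;>
      simp [Matrix.mul_apply, Fin.sum_univ_two, Matrix.trace_fin_two] <;> linarith
  induction N with
  | zero => simp
  | succ N ih =>
    have h1 : Real.sin (((N + 1 : ℕ) : ℝ) * θ) =
        2 * Real.cos θ * Real.sin (N * θ) - Real.sin ((N - 1) * θ) := by
      have e1 : ((N + 1 : ℕ) : ℝ) * θ = N * θ + θ := by push_cast; ring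
      have e2 : ((N : ℝ) - 1) * θ = N * θ - θ := by ring
      rw [e1, e2, Real.sin_add, Real.sin_sub]
      ring
    have h2 : (((N + 1 : ℕ) : ℝ) - 1) * θ = N * θ := by push_cast; ring
    rw [pow_succ, ← smul_mul_assoc, ih, sub_mul, smul_mul_assoc, hCH, h1, h2]
    simp only [smul_mul_assoc, one_mul]
    module

lemma pow_eq_one_of_trace (M : Matrix (Fin 2) (Fin 2) ℝ) (r : ℚ) (hdet : M.det = 1)
    (htr : M.trace = 2 * Real.cos (2 * Real.pi * r))
    (hs : Real.sin (2 * Real.pi * r) ≠ 0) : M ^ r.den = 1 := by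
  have h := sin_smul_pow M _ hdet htr r.den
  have e : (r.den : ℝ) * (2 * Real.pi * r) = r.num * (2 * Real.pi) := by
    have : (r.den : ℝ) * r = r.num := by
      have := Rat.den_mul_eq_num r
      exact_mod_cast this
    linear_combination (2 * Real.pi) * this
  have e1 : Real.sin (r.den * (2 * Real.pi * r)) = 0 := by
    rw [e]; simpa using Real.sin_add_int_mul_two_pi 0 r.num
  have e2 : Real.sin (((r.den : ℝ) - 1) * (2 * Real.pi * r)) = -Real.sin (2 * Real.pi * r) := by
    have : ((r.den : ℝ) - 1) * (2 * Real.pi * r)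
        = -(2 * Real.pi * r) + r.num * (2 * Real.pi) := by rw [← e]; ring
    rw [this, Real.sin_add_int_mul_two_pi, Real.sin_neg]
  rw [e1, e2, zero_smul, zero_sub, neg_smul, neg_neg] at h
  exact smul_right_injective _ hs h

/-- A non-constant affine trace that stays in `[-2, 2]` takes a value `2 cos (2πr)` with
`r` rational and `sin (2πr) ≠ 0`. -/
lemma exists_rational_angle (α β δ : ℝ) (hβ : β ≠ 0) (hδ : 0 < δ)
    (h : ∀ a, |a| < δ → |α - β * a| ≤ 2) :
    ∃ (a : ℝ) (r : ℚ), |a| < δ ∧ α - β * a = 2 * Real.cos (2 * Real.pi * r) ∧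
      Real.sin (2 * Real.pi * r) ≠ 0 := by
  obtain ⟨a₀, ha₀, ht₀⟩ : ∃ a₀, |a₀| < δ ∧ |α - β * a₀| < 2 := by
    have h0 := abs_le.mp (h 0 (by simpa using hδ))
    have h1 := abs_le.mp (h (δ / 2) (by rw [abs_of_pos (by positivity)]; linarith))
    refine ⟨δ / 4, by rw [abs_of_pos (by positivity)]; linarith, ?_⟩
    rw [abs_lt]
    rcases lt_or_gt_of_ne hβ with hb | hb <;>
      constructor <;> nlinarith [mul_pos hδ hδ, mul_neg_of_pos_of_neg hδ (neg_neg_iff_pos.mpr hδ)]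
  rw [abs_lt] at ht₀
  set θ₀ := Real.arccos ((α - β * a₀) / 2) with hθ₀
  have hcos : Real.cos θ₀ = (α - β * a₀) / 2 :=
    Real.cos_arccos (by linarith) (by linarith)
  have hsin : Real.sin θ₀ ≠ 0 := by
    intro hs
    have := Real.sin_sq_add_cos_sq θ₀
    rw [hs, hcos] at this
    nlinarith
  set U : Set ℝ := {x | |(α - 2 * Real.cos (2 * Real.pi * x)) / β| < δ ∧
    Real.sin (2 * Real.pi * x) ≠ 0} with hU
  have hUo : IsOpen U := by
    refine IsOpen.inter ?_ ?_
    · exact isOpen_lt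
        (f := fun x : ℝ => |(α - 2 * Real.cos (2 * Real.pi * x)) / β|) (by fun_prop)
        continuous_const
    · exact isOpen_ne_fun (f := fun x : ℝ => Real.sin (2 * Real.pi * x)) (by fun_prop)
        continuous_const
  have hUn : U.Nonempty := by
    refine ⟨θ₀ / (2 * Real.pi), ?_⟩
    have e : 2 * Real.pi * (θ₀ / (2 * Real.pi)) = θ₀ := by field_simp
    simp only [hU, Set.mem_ofPred_eq, e]
    refine ⟨?_, hsin⟩
    rw [hcos]
    have : (α - 2 * ((α - β * a₀) / 2)) / β = a₀ := by field_simp; ring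
    rwa [this]
  obtain ⟨r, hr⟩ := Rat.denseRange_cast.exists_mem_open hUo hUn
  refine ⟨(α - 2 * Real.cos (2 * Real.pi * r)) / β, r, hr.1, ?_, hr.2⟩
  field_simp
  ring

/-- The semigroup generated by the matrices `P * T(c + a)`, `|a| < δ`, contains a hyperbolic
element as soon as the upper left entry of `P` is nonzero. If some `F = P * T(c + a₁)` has finite
order `N`, then `F ^ (N - 1) * P * T(c + a₂)` is a nontrivial lower triangular unipotent; its
`k`-th power turns `F` into `P * T(c + a₁ + k (a₂ - a₁))`, whose trace is unbounded in `k`. -/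
lemma exists_hyperbolic_product (P : Matrix (Fin 2) (Fin 2) ℝ) (hP : P.det = 1)
    (hP0 : P 0 0 ≠ 0) (c δ E : ℝ) (hδ : 0 < δ) :
    ∃ l : List ℝ, l ≠ [] ∧ (∀ a ∈ l, |a| < δ) ∧
      2 < |((l.map fun a => P * Tmat (c + a) E).prod).trace| := by
  set F : ℝ → Matrix (Fin 2) (Fin 2) ℝ := fun a => P * Tmat (c + a) E with hF
  set α := P 0 0 * (E - c) + P 0 1 - P 1 0 with hα
  have htr : ∀ a, (F a).trace = α - P 0 0 * a := by
    intro a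
    simp [hF, hα, Tmat, Matrix.trace_fin_two, Matrix.mul_apply, Fin.sum_univ_two]
    ring
  have hdet : ∀ a, (F a).det = 1 := by
    intro a
    rw [hF]
    simp [Matrix.det_mul, hP, Tmat, Matrix.det_fin_two]
  by_cases hex : ∃ a, |a| < δ ∧ 2 < |(F a).trace|
  · obtain ⟨a, ha, ht⟩ := hex
    exact ⟨[a], by simp, by simpa using ha, by simpa using ht⟩
  push Not at hex
  obtain ⟨a₁, r, ha₁, hr, hs⟩ := exists_rational_angle α (P 0 0) δ hP0 hδ
    (fun a ha => by rw [← htr]; exact hex a ha)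
  have hpow : F a₁ ^ r.den = 1 := pow_eq_one_of_trace _ r (hdet a₁) (by rw [htr, hr]) hs
  obtain ⟨a₂, ha₂, hne⟩ : ∃ a₂, |a₂| < δ ∧ a₂ ≠ a₁ := by
    by_cases h0 : a₁ = 0
    · exact ⟨δ / 2, by rw [abs_of_pos (by positivity)]; linarith, by rw [h0]; positivity⟩
    · exact ⟨0, by simpa using hδ, fun h => h0 h.symm⟩
  set d := a₂ - a₁ with hd
  have hd0 : d ≠ 0 := sub_ne_zero.mpr hne
  have hL : ∀ a s, F a * !![1, 0; s, 1] = F (a + s) := by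
    intro a s
    simp only [hF, Matrix.mul_assoc]
    congr 1
    ext i j
    fin_cases i <;> fin_cases j <;>
      simp [Tmat, Matrix.mul_apply, Fin.sum_univ_two]
    ring
  have hU : F a₁ ^ (r.den - 1) * F a₂ = !![1, 0; d, 1] := by
    have e : a₂ = a₁ + d := by simp [hd]
    rw [e, ← hL, ← Matrix.mul_assoc, ← pow_succ, Nat.sub_add_cancel r.den_pos, hpow, one_mul]
  have hUk : ∀ k : ℕ, F a₁ * (!![1, 0; d, 1] : Matrix (Fin 2) (Fin 2) ℝ) ^ k = F (a₁ + k * d) := by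
    intro k
    induction k with
    | zero => simp
    | succ k ih =>
      rw [pow_succ, ← Matrix.mul_assoc, ih, hL]
      congr 1
      push_cast
      ring
  obtain ⟨k, hk⟩ := exists_nat_gt ((2 + |α - P 0 0 * a₁|) / |P 0 0 * d|)
  refine ⟨a₁ :: (List.replicate k (List.replicate (r.den - 1) a₁ ++ [a₂])).flatten,
    by simp, ?_, ?_⟩
  · intro a ha
    simp only [List.mem_cons, List.mem_flatten, List.mem_replicate] at ha
    rcases ha with rfl | ⟨l, ⟨_, rfl⟩, ha⟩
    · exact ha₁
    · simp only [List.mem_append, List.mem_replicate, List.mem_singleton] at ha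
      rcases ha with ⟨_, rfl⟩ | rfl <;> assumption
  · have e : ((a₁ :: (List.replicate k (List.replicate (r.den - 1) a₁ ++ [a₂])).flatten).map
        F).prod = F (a₁ + k * d) := by
      rw [← hUk, ← hU]
      simp [List.prod_flatten, List.map_flatten]
    rw [e, htr]
    have hpos : 0 < |P 0 0 * d| := abs_pos.mpr (mul_ne_zero hP0 hd0)
    rw [div_lt_iff₀ hpos] at hk
    have h1 : (k : ℝ) * |P 0 0 * d| = |P 0 0 * (k * d)| := by
      rw [show P 0 0 * (k * d) = k * (P 0 0 * d) by ring, abs_mul (k : ℝ), Nat.abs_cast]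
    have h2 : |P 0 0 * (k * d)| ≤ |α - P 0 0 * a₁| + |α - P 0 0 * (a₁ + k * d)| := by
      have := abs_sub (α - P 0 0 * a₁) (α - P 0 0 * (a₁ + k * d))
      rwa [show α - P 0 0 * a₁ - (α - P 0 0 * (a₁ + k * d)) = P 0 0 * (k * d) by ring] at this
    linarith

/-! ### Potentials generated by words over `{x♯b}` -/

lemma transfer_eq_TmatWord {q : ℕ} (x : Fin q → ℝ) (E : ℝ) (v : ℤ → ℝ) (n : ℤ)
    (h : ∀ i : Fin q, v (n + (i : ℕ)) = E - x i) : transfer v n q = TmatWord x E := by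
  induction q with
  | zero => simp [transfer, TmatWord]
  | succ q ih =>
    rw [transfer_succ, ih (fun i => x i.castSucc) fun i => h i.castSucc]
    have := h (Fin.last q)
    rw [Fin.val_last] at this
    rw [this, TmatWord, TmatWord, List.ofFn_succ']
    simp [Tmat]

/-- In the indeterminate `E`, the upper left entry of the transfer matrix over `q` sites is monic
of degree `q`. -/
lemma monic_transfer (x : ℤ → ℝ) (q : ℕ) :
    (transfer (fun i => Polynomial.X - Polynomial.C (x i)) 0 q 0 0).Monic ∧
    (transfer (fun i => Polynomial.X - Polynomial.C (x i)) 0 q 0 0).degree = (q : WithBot ℕ) ∧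
    (transfer (fun i => Polynomial.X - Polynomial.C (x i)) 0 q 1 0).degree < (q : WithBot ℕ) + 1 := by
  induction q with
  | zero => simp [transfer]
  | succ q ih =>
    obtain ⟨h1, h2, h3⟩ := ih
    rw [transfer_succ_top, transfer_succ_bot, h2]
    have hd : ((Polynomial.X - Polynomial.C (x (0 + q))) *
        transfer (fun i => Polynomial.X - Polynomial.C (x i)) 0 q 0 0).degree
          = (q : WithBot ℕ) + 1 := by
      rw [Polynomial.degree_mul, h2, Polynomial.degree_X_sub_C, add_comm]
    refine ⟨?_, ?_, ?_⟩
    · exact ((Polynomial.monic_X_sub_C _).mul h1).sub_of_left (by rw [hd]; exact h3)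
    · rw [Polynomial.degree_sub_eq_left_of_degree_lt (by rw [hd]; exact h3), hd]
      push_cast
      rfl
    · have : (q : WithBot ℕ) < ((q + 1 + 1 : ℕ) : WithBot ℕ) := by
        exact_mod_cast (by omega : q < q + 1 + 1)
      exact_mod_cast this

lemma finite_exceptional {q : ℕ} (x : Fin q → ℝ) : {E : ℝ | TmatWord x E 0 0 = 0}.Finite := by
  set x' : ℤ → ℝ := fun i => if h : i.toNat < q then x ⟨i.toNat, h⟩ else 0 with hx'
  set p := transfer (fun i => Polynomial.X - Polynomial.C (x' i)) 0 q 0 0 with hp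
  have hp0 : p ≠ 0 := (monic_transfer x' q).1.ne_zero
  refine (p.rootSet_finite ℝ).subset fun E hE => ?_
  rw [Polynomial.mem_rootSet]
  refine ⟨hp0, ?_⟩
  have h1 := transfer_map (Polynomial.evalRingHom E)
    (fun i => Polynomial.X - Polynomial.C (x' i)) 0 q
  rw [transfer_eq_TmatWord x E _ 0 (fun i => by simp [hx'])] at h1
  have h2 := congrFun (congrFun h1 0) 0
  rw [Polynomial.coe_aeval_eq_eval]
  exact h2.trans hE

lemma isDiscreteSet_of_finite {S : Set ℝ} (hS : S.Finite) : IsDiscreteSet S := by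
  intro x hx
  rw [accPt_iff_frequently] at hx
  have hc : IsClosed (S \ {x}) := (hS.subset Set.sdiff_subset).isClosed
  have hn : (S \ {x})ᶜ ∈ nhds x := hc.isOpen_compl.mem_nhds (by simp)
  obtain ⟨y, ⟨hy, hyS⟩, hy'⟩ := (hx.and_eventually hn).exists
  exact hy' ⟨hyS, hy⟩

lemma agg_perExt_apply {k M : ℕ} (y : Fin M → Fin k → ℝ) (i r : ℕ) (hi : i < M) (hr : r < k) :
    agg k (perExt y) ((k * i + r : ℕ) : ℤ) = y ⟨i, hi⟩ ⟨r, hr⟩ := by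
  have hk : 0 < k := by omega
  have hM : 0 < M := by omega
  have e1 : (((k * i + r : ℕ) : ℤ) % (k : ℤ)).toNat = r := by
    rw [← Int.natCast_mod, Int.toNat_natCast, Nat.mul_add_mod, Nat.mod_eq_of_lt hr]
  have e2 : Int.fdiv ((k * i + r : ℕ) : ℤ) k = (i : ℤ) := by
    rw [Int.fdiv_eq_ediv_of_nonneg _ (by positivity), ← Int.natCast_ediv,
      Nat.mul_add_div hk, Nat.div_eq_of_lt hr, add_zero]
  have e3 : ((i : ℤ) % (M : ℤ)).toNat = i := by
    rw [← Int.natCast_mod, Int.toNat_natCast, Nat.mod_eq_of_lt hi]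
  simp only [agg, perExt, dif_pos hk, dif_pos hM]
  congr 1
  · congr 1
    simp only [e2, e3]
  · simp only [e1]

lemma agg_perExt_periodic {k M : ℕ} (y : Fin M → Fin k → ℝ) (n : ℤ) :
    agg k (perExt y) (n + (k * M : ℕ)) = agg k (perExt y) n := by
  rcases Nat.eq_zero_or_pos k with hk | hk
  · simp [agg, hk]
  rcases Nat.eq_zero_or_pos M with hM | hM
  · simp [hM]
  have e1 : (n + ((k * M : ℕ) : ℤ)) % (k : ℤ) = n % k := by
    push_cast; exact Int.add_mul_emod_self_left _ _ _
  have e2 : Int.fdiv (n + ((k * M : ℕ) : ℤ)) k = Int.fdiv n k + M := by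
    rw [Int.fdiv_eq_ediv_of_nonneg _ (by positivity), Int.fdiv_eq_ediv_of_nonneg _ (by positivity)]
    push_cast
    exact Int.add_mul_ediv_left _ _ (by omega)
  have e3 : (Int.fdiv n k + M) % (M : ℤ) = Int.fdiv n k % M := by simp
  simp only [agg, perExt, dif_pos hk, dif_pos hM]
  congr 1
  · congr 1
    simp only [e2, e3]
  · simp only [e1]

/-- The periodic potential generated by the word with blocks `ξ i ♯ b`. -/
def wordPot {n m M : ℕ} (b : Fin m → ℝ) (ξ : Fin M → Fin n → ℝ) : ℤ → ℝ :=
  agg (n + m) (perExt fun i => Fin.append (ξ i) b)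

lemma wordPot_apply {n m M : ℕ} (b : Fin m → ℝ) (ξ : Fin M → Fin n → ℝ) (i r : ℕ) (hi : i < M)
    (hr : r < n + m) :
    wordPot b ξ (((n + m) * i + r : ℕ) : ℤ) = Fin.append (ξ ⟨i, hi⟩) b ⟨r, hr⟩ :=
  agg_perExt_apply _ i r hi hr

lemma append_line {n m : ℕ} (b : Fin m → ℝ) (x x' : Fin n → ℝ) (s : ℝ) (r : Fin (n + m)) :
    Fin.append (x + s • (x' - x)) b r
      = Fin.append x b r + s * (Fin.append x' b r - Fin.append x b r) := by
  refine Fin.addCases (fun i => ?_) (fun i => ?_) r <;> simp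

/-- Values of `wordPot` within one period, with the site given by a single index. -/
lemma wordPot_apply' {n m M : ℕ} (b : Fin m → ℝ) (ξ : Fin M → Fin n → ℝ) (j : ℕ)
    (hj : j < (n + m) * M) (hk : 0 < n + m) :
    wordPot b ξ (j : ℤ) = Fin.append (ξ ⟨j / (n + m), Nat.div_lt_of_lt_mul hj⟩) b
      ⟨j % (n + m), Nat.mod_lt _ hk⟩ := by
  rw [← wordPot_apply, Nat.div_add_mod]

/-! ### A word whose truncated transfer matrix has nonzero upper left entry -/

/-- Given `A 0 0 ≠ 0` and `B 0 0 ≠ 0`, some letter `t` makes `(A * T(t) * B) 0 0` nonzero: this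
entry is affine in `t` with slope `- A 0 0 * B 0 0`. -/
lemma exists_letter (A B : Matrix (Fin 2) (Fin 2) ℝ) (E : ℝ) (hA : A 0 0 ≠ 0) (hB : B 0 0 ≠ 0) :
    ∃ t : ℝ, (A * Tmat t E * B) 0 0 ≠ 0 := by
  refine ⟨E - (1 - (A 0 1 * B 0 0 - A 0 0 * B 1 0)) / (A 0 0 * B 0 0), ?_⟩
  have : (A * Tmat (E - (1 - (A 0 1 * B 0 0 - A 0 0 * B 1 0)) / (A 0 0 * B 0 0)) E * B) 0 0
      = 1 := by
    simp [Tmat, Matrix.mul_apply, Fin.sum_univ_two]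
    field_simp
    ring
  rw [this]
  exact one_ne_zero

/-- If `A 0 0 ≠ 0`, letters `t i` can be chosen inductively so that every product
`A * T(t i) * ⋯ * A * T(t 1) * A` has nonzero upper left entry. -/
lemma exists_letters (A : Matrix (Fin 2) (Fin 2) ℝ) (E : ℝ) (hA : A 0 0 ≠ 0) :
    ∃ (t : ℕ → ℝ) (B : ℕ → Matrix (Fin 2) (Fin 2) ℝ), B 0 = A ∧
      (∀ i, B (i + 1) = A * Tmat (t (i + 1)) E * B i) ∧ ∀ i, B i 0 0 ≠ 0 := by
  choose τ hτ using fun B : {B : Matrix (Fin 2) (Fin 2) ℝ // B 0 0 ≠ 0} =>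
    exists_letter A B.1 E hA B.2
  let B : ℕ → {B : Matrix (Fin 2) (Fin 2) ℝ // B 0 0 ≠ 0} := fun i =>
    Nat.rec ⟨A, hA⟩ (fun _ B => ⟨A * Tmat (τ B) E * B.1, hτ B⟩) i
  exact ⟨fun i => τ (B (i - 1)), fun i => (B i).1, rfl, fun i => rfl, fun i => (B i).2⟩

/-- The words whose blocks are `t i, 0, …, 0, b` include one for which the transfer matrix over
all sites but the first has nonzero upper left entry. -/
lemma exists_good_word {n m : ℕ} (b : Fin m → ℝ) (E : ℝ)
    (hE : TmatWord (Fin.append (fun _ : Fin n => (0 : ℝ)) b) E 0 0 ≠ 0) (M : ℕ) :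
    ∃ ξ : Fin (M + 1) → Fin (n + 1) → ℝ,
      transfer (fun j => E - wordPot b ξ j) 1 (n + m + (n + 1 + m) * M) 0 0 ≠ 0 := by
  obtain ⟨t, B, hB0, hB, hne⟩ := exists_letters _ E hE
  set ξ : Fin (M + 1) → Fin (n + 1) → ℝ := fun i => Fin.cons (t i) (fun _ => 0) with hξ
  set v : ℤ → ℝ := fun j => E - wordPot b ξ j with hv
  have hfirst : ∀ i ≤ M, v (((n + 1 + m) * i : ℕ) : ℤ) = E - t i := by
    intro i hi
    have h := wordPot_apply b ξ i 0 (by omega) (by omega)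
    rw [add_zero] at h
    simp only [hv, h]
    have : (⟨0, by omega⟩ : Fin (n + 1 + m)) = Fin.castAdd m 0 := rfl
    rw [this, Fin.append_left]
    simp [hξ]
  have hrest : ∀ i ≤ M, transfer v (((n + 1 + m) * i : ℕ) + 1 : ℤ) (n + m)
      = TmatWord (Fin.append (fun _ : Fin n => (0 : ℝ)) b) E := by
    intro i hi
    refine transfer_eq_TmatWord _ _ _ _ fun r => ?_
    have h := wordPot_apply b ξ i (r + 1) (by omega) (by omega)
    have e : ((((n + 1 + m) * i : ℕ) : ℤ) + 1 + ((r : ℕ) : ℤ))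
        = (((n + 1 + m) * i + (r + 1) : ℕ) : ℤ) := by push_cast; ring
    simp only [hv, e, h]
    congr 1
    refine Fin.addCases (fun c => ?_) (fun c => ?_) r
    · have : (⟨((Fin.castAdd m c : Fin (n + m)) : ℕ) + 1, by simp; omega⟩ : Fin (n + 1 + m))
        = Fin.castAdd m c.succ := by ext; simp
      rw [this, Fin.append_left, Fin.append_left]
      simp [hξ]
    · have : (⟨((Fin.natAdd n c : Fin (n + m)) : ℕ) + 1, by simp; omega⟩ : Fin (n + 1 + m))
        = Fin.natAdd (n + 1) c := by ext; simp; omega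
      rw [this, Fin.append_right, Fin.append_right]
  have main : ∀ i ≤ M, transfer v 1 (n + m + (n + 1 + m) * i) = B i := by
    intro i
    induction i with
    | zero => intro _; simpa [hB0] using hrest 0 (by omega)
    | succ i ih =>
      intro hi
      have e : n + m + (n + 1 + m) * (i + 1)
          = (n + m + (n + 1 + m) * i) + (1 + (n + m)) := by ring
      have e1 : (1 : ℤ) + ((n + m + (n + 1 + m) * i : ℕ) : ℤ)
          = (((n + 1 + m) * (i + 1) : ℕ) : ℤ) := by push_cast; ring
      rw [e, transfer_add, ih (by omega), transfer_add, transfer_one, e1, hfirst _ hi,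
        Nat.cast_one, hrest _ hi, hB]
      rfl
  exact ⟨ξ, by rw [main M le_rfl]; exact hne M⟩

/-- Along a segment from any word to the word of `exists_good_word` the entry is a nonzero
polynomial, so it is nonzero for words arbitrarily close to the given one. -/
lemma exists_good_word_near {n m : ℕ} (b : Fin m → ℝ) (E : ℝ)
    (hE : TmatWord (Fin.append (fun _ : Fin n => (0 : ℝ)) b) E 0 0 ≠ 0) (M : ℕ)
    (x : Fin (M + 1) → Fin (n + 1) → ℝ) (ε : ℝ) (hε : 0 < ε) :
    ∃ ξ : Fin (M + 1) → Fin (n + 1) → ℝ, dist x ξ < ε ∧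
      transfer (fun j => E - wordPot b ξ j) 1 (n + m + (n + 1 + m) * M) 0 0 ≠ 0 := by
  obtain ⟨ξ', hξ'⟩ := exists_good_word b E hE M
  set J := n + m + (n + 1 + m) * M with hJ
  set V : ℤ → Polynomial ℝ := fun j => Polynomial.C (E - wordPot b x j)
    - Polynomial.X * Polynomial.C (wordPot b ξ' j - wordPot b x j) with hV
  set p := transfer V 1 J 0 0 with hp
  have heval : ∀ s : ℝ, p.eval s
      = transfer (fun j => E - wordPot b (x + s • (ξ' - x)) j) 1 J 0 0 := by
    intro s
    have h1 := congrFun (congrFun (transfer_map (Polynomial.evalRingHom s) V 1 J) 0) 0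
    refine h1.trans ?_
    suffices h3 : transfer (fun j => Polynomial.evalRingHom s (V j)) 1 J
        = transfer (fun j => E - wordPot b (x + s • (ξ' - x)) j) 1 J by rw [h3]
    refine transfer_congr _ _ _ _ _ fun j hj => ?_
    have hj' : 1 + j < (n + 1 + m) * (M + 1) := by
      rw [hJ] at hj
      have : (n + 1 + m) * (M + 1) = n + m + (n + 1 + m) * M + 1 := by ring
      omega
    have e : (1 : ℤ) + (j : ℤ) = ((1 + j : ℕ) : ℤ) := by push_cast; rfl
    simp only [hV, e, wordPot_apply' b _ _ hj' (by omega), Polynomial.coe_evalRingHom,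
      Polynomial.eval_sub, Polynomial.eval_C, Polynomial.eval_mul, Polynomial.eval_X,
      Pi.add_apply x, Pi.smul_apply s (ξ' - x), Pi.sub_apply ξ', append_line]
    ring
  have hp0 : p ≠ 0 := by
    intro h
    apply hξ'
    have := heval 1
    rw [h, Polynomial.eval_zero, one_smul, add_sub_cancel] at this
    exact this.symm
  have h1 : ∀ᶠ s in nhdsWithin (0 : ℝ) {0}ᶜ, p.eval s ≠ 0 := by
    have hfin := p.rootSet_finite ℝ
    have hd := isDiscreteSet_of_finite hfin 0
    rw [accPt_iff_frequently_nhdsNE, Filter.not_frequently] at hd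
    filter_upwards [hd] with s hs h0
    exact hs (Polynomial.mem_rootSet.mpr ⟨hp0, by rwa [Polynomial.coe_aeval_eq_eval]⟩)
  have h2 : ∀ᶠ s in nhdsWithin (0 : ℝ) {0}ᶜ, dist x (x + s • (ξ' - x)) < ε := by
    refine Filter.Eventually.filter_mono nhdsWithin_le_nhds ?_
    have hc : Continuous fun s : ℝ => dist x (x + s • (ξ' - x)) := by fun_prop
    exact hc.continuousAt.eventually_lt continuousAt_const (by simpa using hε)
  obtain ⟨s, hs1, hs2⟩ := (h1.and h2).exists
  exact ⟨_, hs2, by rw [← heval]; exact hs1⟩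

/-! ### Concatenating perturbed copies of a word -/

lemma dist_append_lt {n m : ℕ} (b : Fin m → ℝ) (x x' : Fin n → ℝ) (ε : ℝ) (hε : 0 < ε)
    (h : dist x x' < ε) : dist (Fin.append x b) (Fin.append x' b) < ε := by
  rw [dist_pi_lt_iff hε] at h ⊢
  intro r
  refine Fin.addCases (fun i => ?_) (fun i => ?_) r
  · simpa using h i
  · simpa using hε

/-- The word `ξ` with its very first letter increased by `a`. -/
def bump {n M : ℕ} (ξ : Fin (M + 1) → Fin (n + 1) → ℝ) (a : ℝ) : Fin (M + 1) → Fin (n + 1) → ℝ :=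
  ξ + Pi.single 0 (Pi.single 0 a)

lemma dist_bump {n M : ℕ} (ξ : Fin (M + 1) → Fin (n + 1) → ℝ) (a : ℝ) :
    dist ξ (bump ξ a) ≤ |a| := by
  rw [bump, dist_self_add_right, pi_norm_le_iff_of_nonneg (abs_nonneg a)]
  intro i
  rw [pi_norm_le_iff_of_nonneg (abs_nonneg a)]
  intro r
  rcases eq_or_ne i 0 with rfl | hi
  · rcases eq_or_ne r 0 with rfl | hr
    · simp
    · simp [hr]
  · simp [hi]

lemma transfer_bump {n m M : ℕ} (b : Fin m → ℝ) (ξ : Fin (M + 1) → Fin (n + 1) → ℝ) (a E : ℝ) :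
    transfer (fun j => E - wordPot b (bump ξ a) j) 0 ((n + 1 + m) * (M + 1))
      = transfer (fun j => E - wordPot b ξ j) 1 (n + m + (n + 1 + m) * M)
        * Tmat (ξ 0 0 + a) E := by
  have e : (n + 1 + m) * (M + 1) = 1 + (n + m + (n + 1 + m) * M) := by ring
  have hj0 : 0 < (n + 1 + m) * (M + 1) := by positivity
  have h0 : wordPot b (bump ξ a) 0 = ξ 0 0 + a := by
    have h := wordPot_apply b (bump ξ a) 0 0 (by omega) (by omega)
    have e0 : (⟨0, by omega⟩ : Fin (n + 1 + m)) = Fin.castAdd m 0 := rfl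
    rw [e0, Fin.append_left] at h
    simpa [bump] using h
  rw [e, transfer_add, transfer_one]
  congr 1
  · refine transfer_congr _ _ _ _ _ fun j hj => ?_
    have hj' : 1 + j < (n + 1 + m) * (M + 1) := by omega
    have e1 : (0 : ℤ) + ((1 : ℕ) : ℤ) + (j : ℤ) = ((1 + j : ℕ) : ℤ) := by push_cast; ring
    have e2 : (1 : ℤ) + (j : ℤ) = ((1 + j : ℕ) : ℤ) := by push_cast; ring
    rw [e1, e2, wordPot_apply' b _ _ hj' (by omega), wordPot_apply' b _ _ hj' (by omega)]
    congr 1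
    rcases Nat.eq_zero_or_pos ((1 + j) / (n + 1 + m)) with hq | hq
    · -- In the first block the site is not the first one, so its letter is unchanged.
      have hr : 0 < (1 + j) % (n + 1 + m) := by
        have := Nat.div_add_mod (1 + j) (n + 1 + m)
        rw [hq] at this
        omega
      generalize hR : (⟨(1 + j) % (n + 1 + m), Nat.mod_lt _ (by omega)⟩ : Fin (n + 1 + m)) = R
      have hR0 : 0 < (R : ℕ) := by rw [← hR]; exact hr
      clear hR
      induction R using Fin.addCases with
      | left c =>
        have hc : c ≠ 0 := by rintro rfl; simp at hR0
        rw [Fin.append_left, Fin.append_left]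
        simp [bump, hq, hc]
      | right c => rw [Fin.append_right, Fin.append_right]
    · have hne : (⟨(1 + j) / (n + 1 + m), Nat.div_lt_of_lt_mul hj'⟩ : Fin (M + 1)) ≠ 0 := by
        intro h
        have := congrArg Fin.val h
        simp only [Fin.val_zero] at this
        omega
      have : bump ξ a ⟨(1 + j) / (n + 1 + m), Nat.div_lt_of_lt_mul hj'⟩
          = ξ ⟨(1 + j) / (n + 1 + m), Nat.div_lt_of_lt_mul hj'⟩ := by
        simp only [bump, Pi.add_apply, Pi.single_eq_of_ne hne, add_zero]
      rw [this]
  · rw [h0]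
    rfl

/-- The concatenation of the words `Ξ 0, …, Ξ (L - 1)`, each of `M` blocks. -/
def concatWord {n M : ℕ} (hM : 0 < M) (Ξ : ℕ → Fin M → Fin n → ℝ) (L : ℕ) :
    Fin (M * L) → Fin n → ℝ :=
  fun i => Ξ (i / M) ⟨i % M, Nat.mod_lt _ hM⟩

lemma transfer_concatWord {n m M : ℕ} (hk : 0 < n + m) (hM : 0 < M) (b : Fin m → ℝ) (E : ℝ)
    (Ξ : ℕ → Fin M → Fin n → ℝ) (L u : ℕ) (hu : u ≤ L) :
    transfer (fun j => E - wordPot b (concatWord hM Ξ L) j) 0 ((n + m) * M * u)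
      = ((List.range u).map fun i =>
        transfer (fun j => E - wordPot b (Ξ i) j) 0 ((n + m) * M)).reverse.prod := by
  induction u with
  | zero => simp [transfer]
  | succ u ih =>
    rw [Nat.mul_succ, transfer_add, ih (by omega), List.range_succ]
    simp only [List.map_append, List.map_cons, List.map_nil, List.reverse_append,
      List.reverse_cons, List.reverse_nil, List.nil_append, List.cons_append, List.prod_cons]
    congr 1
    refine transfer_congr _ _ _ _ _ fun j hj => ?_
    have hj1 : j / (n + m) < M := Nat.div_lt_of_lt_mul hj
    have hi : M * u + j / (n + m) < M * L := by
      have : M * (u + 1) ≤ M * L := Nat.mul_le_mul_left _ hu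
      rw [Nat.mul_succ] at this
      omega
    have hjm := Nat.div_add_mod j (n + m)
    have e : (0 : ℤ) + (((n + m) * M * u : ℕ) : ℤ) + (j : ℤ)
        = (((n + m) * (M * u + j / (n + m)) + j % (n + m) : ℕ) : ℤ) := by
      have e' : (n + m) * (M * u + j / (n + m)) + j % (n + m) = (n + m) * M * u + j := by
        rw [Nat.mul_add, Nat.add_assoc ((n + m) * (M * u)), hjm, Nat.mul_assoc]
      rw [e', zero_add, Nat.cast_add]
    rw [e, zero_add, wordPot_apply b _ _ _ hi (Nat.mod_lt _ hk), wordPot_apply' b _ _ hj hk]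
    have e1 : (M * u + j / (n + m)) / M = u := by
      rw [Nat.mul_add_div hM, Nat.div_eq_of_lt hj1, add_zero]
    have e2 : (M * u + j / (n + m)) % M = j / (n + m) := by
      rw [Nat.mul_add_mod, Nat.mod_eq_of_lt hj1]
    simp only [concatWord, e1, e2]

/-- For any `m ∈ ℕ`, `b ∈ ℝ^m`, `n ∈ ℕ`, the set `{x♯b : x ∈ ℝ^n} ⊆ ℝ^{n+m}` is
gap-rich, with exceptional set the finite set
`S = {E : (T(0^{♯(n-1)}♯b,E))₁₁ = 0}`. -/
theorem append_const_gapRich (m : ℕ) (hm : 0 < m) (b : Fin m → ℝ) (n : ℕ) (hn : 0 < n) :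
    {E : ℝ | TmatWord (Fin.append (fun _ : Fin (n - 1) => (0 : ℝ)) b) E 0 0 = 0}.Finite ∧
    GapRich (n + m) {z : Fin (n + m) → ℝ | ∃ x : Fin n → ℝ, z = Fin.append x b}
      {E : ℝ | TmatWord (Fin.append (fun _ : Fin (n - 1) => (0 : ℝ)) b) E 0 0 = 0} := by
  refine ⟨finite_exceptional _, isDiscreteSet_of_finite (finite_exceptional _), ?_⟩
  intro E hE M hM x hx ε hε
  obtain ⟨n, rfl⟩ := Nat.exists_eq_succ_of_ne_zero hn.ne'
  obtain ⟨M, rfl⟩ := Nat.exists_eq_succ_of_ne_zero hM.ne'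
  have hE' : TmatWord (Fin.append (fun _ : Fin n => (0 : ℝ)) b) E 0 0 ≠ 0 := hE
  choose x₀ hx₀ using hx
  obtain ⟨ξ, hξ, hP⟩ := exists_good_word_near b E hE' M x₀ (ε / 2) (by positivity)
  obtain ⟨l, hl, hlδ, htr⟩ := exists_hyperbolic_product _ (det_transfer _ _ _) hP (ξ 0 0) (ε / 2) E
    (by positivity)
  -- The list is reversed because transfer matrices of later letters act from the left.
  set a : ℕ → ℝ := fun u => l.reverse.getD u 0 with ha
  have haδ : ∀ u, |a u| < ε / 2 := by
    intro u
    by_cases hu : u < l.reverse.length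
    · rw [ha]
      simp only [List.getD_eq_getElem _ _ hu]
      exact hlδ _ (List.mem_reverse.mp (List.getElem_mem hu))
    · rw [ha]
      simp only [List.getD_eq_default _ _ (not_lt.mp hu), abs_zero]
      positivity
  have hlist : (List.range l.length).map a = l.reverse := by
    refine List.ext_getElem (by simp) fun i h1 h2 => ?_
    rw [List.getElem_map, List.getElem_range, ha]
    exact List.getD_eq_getElem _ _ h2
  have hL : 0 < l.length := List.length_pos_iff.mpr hl
  set η := concatWord hM (fun u => bump ξ (a u)) l.length with hη
  refine ⟨(M + 1) * l.length, by positivity, fun i => Fin.append (η i) b,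
    fun i => ⟨η i, rfl⟩, fun j => ?_, ?_⟩
  · have hML : 0 < (M + 1) * l.length := by positivity
    simp only [perExt, dif_pos hML, dif_pos (Nat.succ_pos M)]
    rw [hx₀]
    refine dist_append_lt b _ _ ε hε ?_
    have hidx : (j % (((M + 1) * l.length : ℕ) : ℤ)).toNat % (M + 1)
        = (j % ((M + 1 : ℕ) : ℤ)).toNat := by
      have h0 : 0 ≤ j % (((M + 1) * l.length : ℕ) : ℤ) := Int.emod_nonneg _ (by omega)
      have h1 : 0 ≤ j % ((M + 1 : ℕ) : ℤ) := Int.emod_nonneg _ (by omega)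
      apply Int.natCast_inj.mp
      rw [Int.natCast_mod, Int.toNat_of_nonneg h0, Int.toNat_of_nonneg h1, Nat.cast_mul]
      exact Int.emod_emod_of_dvd _ (Dvd.intro _ rfl)
    simp only [hη, concatWord, hidx]
    refine lt_of_le_of_lt (dist_le_pi_dist x₀ (bump ξ _) _) ?_
    have := dist_triangle x₀ ξ (bump ξ (a ((j % (((M + 1) * l.length : ℕ) : ℤ)).toNat / (M + 1))))
    have h2 := dist_bump ξ (a ((j % (((M + 1) * l.length : ℕ) : ℤ)).toNat / (M + 1)))
    have h3 := haδ ((j % (((M + 1) * l.length : ℕ) : ℤ)).toNat / (M + 1))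
    exact lt_of_le_of_lt this (by linarith)
  · refine not_mem_spectrum _ E ((n + 1 + m) * ((M + 1) * l.length)) (by positivity)
      (agg_perExt_periodic _) ?_
    have h := transfer_concatWord (n := n + 1) (by omega) hM b E (fun u => bump ξ (a u))
      l.length l.length le_rfl
    simp only [transfer_bump] at h
    have h' : (List.range l.length).map (fun i =>
        transfer (fun j => E - wordPot b ξ j) 1 (n + m + (n + 1 + m) * M)
          * Tmat (ξ 0 0 + a i) E) = l.reverse.map (fun c =>
        transfer (fun j => E - wordPot b ξ j) 1 (n + m + (n + 1 + m) * M)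
          * Tmat (ξ 0 0 + c) E) := by
      rw [← hlist, List.map_map]
      rfl
    rw [h', ← List.map_reverse, List.reverse_reverse, mul_assoc] at h
    rw [← h] at htr
    exact htr
end
end

section
/- Let X be a Banach space and suppose A : X × ℝ → SL(2,ℝ) is analytic and non-ahyperbolic with exceptional set S. Then for every E ∈ ℝ∖S, every x ∈ X, and every ε > 0, there exist k ∈ ℕ and a word y = y₁⋯y_k ∈ X^k such that ‖y_j − x‖ < ε for all 1 ≤ j ≤ k and A(y,E) := A(y_k,E)⋯A(y₁,E) is hyperbolic. -/
/-!
Along the real line `t ↦ x + t (y₀ - x)` through `x` and a point `y₀` with `A(y₀,E)` hyperbolic, the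
matrices `M t` depend analytically on `t`. Suppose that no word with letters near `x` is hyperbolic.

The trace of `M t` is not constant near `0`, since otherwise it would be constant everywhere, while
`|tr (M 0)| ≤ 2 < |tr (M 1)|`. Hence near `0` it takes all values of a nondegenerate interval, and
some `B = M t₀` has trace `2 cos θ` with `θ / 2π` irrational
(`exists_irrational_angle`). For `C = M t` with `t` small, the words `C, B, …, B` give
`|tr (Bⁿ C)| ≤ 2` for all `n`. Here `tr (Bⁿ C) = α cos nθ + β sin nθ`, so density of the multiples of
`θ` on the circle yields `α² + β² ≤ 4` (`sq_add_sq_le_of_irrational`), which says that the Fricke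
expression `tr² B + tr² C + tr² (BC) - tr B tr C tr (BC) - 4 = tr [B,C] - 2` is nonpositive
(`fricke_nonpos`). It is always nonnegative when `B` is elliptic (`fricke_nonneg`), so it vanishes
for small `t`, hence for all `t` by analyticity. At `t = 1` its vanishing, read as a quadratic
equation for `tr (BC)`, forces `(tr² B - 4) (tr² C - 4) ≥ 0`, so `C = M 1` is not hyperbolic.
-/

open Set

noncomputable section

/-- `SL(2,ℝ)`. -/
abbrev SL2R := Matrix.SpecialLinearGroup (Fin 2) ℝ

/-- A matrix in SL(2,ℝ) is hyperbolic if `|tr| > 2`. -/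
def IsHyperbolic (M : SL2R) : Prop :=
  2 < |Matrix.trace (M : Matrix (Fin 2) (Fin 2) ℝ)|

/-- A matrix in SL(2,ℝ) is elliptic if `|tr| < 2`. -/
def IsElliptic (M : SL2R) : Prop :=
  |Matrix.trace (M : Matrix (Fin 2) (Fin 2) ℝ)| < 2

/-- Extension of `A` to words: `A(y₁⋯y_m, E) = A(y_m,E) ⋯ A(y₁,E)`. -/
def wordProd {X : Type*} (A : X → ℝ → SL2R) {m : ℕ} (y : Fin m → X) (E : ℝ) : SL2R :=
  ((List.ofFn fun i => A (y i) E).reverse).prod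

/-- `A : X × ℝ → SL(2,ℝ)` is non-ahyperbolic with exceptional set `S`:
`S` is discrete and for every `E ∉ S` some `A(y,E)` is hyperbolic. -/
def NonAhyperbolic {X : Type*} (A : X → ℝ → SL2R) (S : Set ℝ) : Prop :=
  IsDiscreteSet S ∧ ∀ E : ℝ, E ∉ S → ∃ y : X, IsHyperbolic (A y E)

/-- `A : X × ℝ → SL(2,ℝ)` is gap-rich with exceptional set `S`: `S` is discrete
and for every `E ∉ S`, any word over `X` can be perturbed (in the uniform metric
on periodic extensions) to a word whose matrix at `E` is hyperbolic. -/
def GapRichMap {X : Type*} [NormedAddCommGroup X] (A : X → ℝ → SL2R) (S : Set ℝ) : Prop :=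
  IsDiscreteSet S ∧
  ∀ E : ℝ, E ∉ S → ∀ m : ℕ, 0 < m → ∀ x : Fin m → X, ∀ ε : ℝ, 0 < ε →
    ∃ l : ℕ, 0 < l ∧ ∃ y : Fin l → X,
      (∀ j : ℤ, dist (perExt x j) (perExt y j) < ε) ∧
      IsHyperbolic (wordProd A y E)


/-- The trace on `SL(2,ℝ)`. -/
def tr2 (M : SL2R) : ℝ := Matrix.trace (M : Matrix (Fin 2) (Fin 2) ℝ)

/-- By Fricke's identity this is `tr (B C B⁻¹ C⁻¹) - 2`. -/
def fricke (B C : SL2R) : ℝ :=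
  tr2 B ^ 2 + tr2 C ^ 2 + tr2 (B * C) ^ 2 - tr2 B * tr2 C * tr2 (B * C) - 4

lemma tr2_eq (M : SL2R) : tr2 M = M.1 0 0 + M.1 1 1 := by
  simp [tr2, Matrix.trace_fin_two]

lemma tr2_mul (B C : SL2R) : tr2 (B * C) =
    B.1 0 0 * C.1 0 0 + B.1 0 1 * C.1 1 0 + (B.1 1 0 * C.1 0 1 + B.1 1 1 * C.1 1 1) := by
  simp [tr2, Matrix.trace_fin_two, Matrix.mul_apply, Fin.sum_univ_two]

/-- The expression equals `-det K` for the commutator `K = BC - CB`. As `tr K = tr (B K) = 0`, a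
multiple of `-det K` is a binary quadratic form of discriminant `tr² B - 4 < 0`. -/
lemma fricke_nonneg (B C : SL2R) (hB : |tr2 B| < 2) : 0 ≤ fricke B C := by
  have hB2 : tr2 B ^ 2 < 4 := by
    have := sq_lt_sq' (abs_lt.1 hB).1 (abs_lt.1 hB).2
    linarith
  have dB := B.2
  have dC := C.2
  rw [Matrix.det_fin_two] at dB dC
  rw [fricke, tr2_mul, tr2_eq C]
  rw [tr2_eq B] at hB2 ⊢
  generalize B.1 0 0 = p at *
  generalize B.1 0 1 = q at *
  generalize B.1 1 0 = r at *
  generalize B.1 1 1 = w at *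
  generalize C.1 0 0 = a at *
  generalize C.1 0 1 = b at *
  generalize C.1 1 0 = c at *
  generalize C.1 1 1 = d at *
  have hq : q ≠ 0 := by
    rintro rfl
    nlinarith [sq_nonneg (p - w)]
  have hq2 : 0 < q ^ 2 := by positivity
  -- entries of `K`: `k` upper left, `l` upper right, `m` lower left (the lower right one is `-k`)
  obtain ⟨k, hk⟩ : ∃ k, k = q * c - b * r := ⟨_, rfl⟩
  obtain ⟨l, hl⟩ : ∃ l, l = p * b + q * d - a * q - b * w := ⟨_, rfl⟩
  obtain ⟨m, hm⟩ : ∃ m, m = r * a + w * c - c * p - d * r := ⟨_, rfl⟩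
  have hF : (p + w) ^ 2 + (a + d) ^ 2 + (p * a + q * c + (r * b + w * d)) ^ 2
      - (p + w) * (a + d) * (p * a + q * c + (r * b + w * d)) - 4 = k ^ 2 + l * m := by
    rw [hk, hl, hm]
    linear_combination (-(a + d) ^ 2 + 4) * dB + (-(p + w) ^ 2 + 4 * (p * w - q * r)) * dC
  rw [hF]
  have hK : q * m = (w - p) * k - r * l := by rw [hk, hl, hm]; ring
  have h4 : 0 ≤ 4 * q ^ 2 * (k ^ 2 + l * m) := by
    have : 4 * q ^ 2 * (k ^ 2 + l * m) =
        (2 * q * k + (w - p) * l) ^ 2 + (4 - (p + w) ^ 2) * l ^ 2 := by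
      linear_combination 4 * q * l * hK + 4 * l ^ 2 * dB
    rw [this]
    nlinarith [sq_nonneg (2 * q * k + (w - p) * l), mul_nonneg (sub_nonneg.2 hB2.le) (sq_nonneg l)]
  by_contra! h
  nlinarith

lemma sq_add_sq_le_of_irrational {θ α β : ℝ} (hθ : Irrational (θ / (2 * Real.pi)))
    (h : ∀ n : ℕ, |α * Real.cos (n * θ) + β * Real.sin (n * θ)| ≤ 2) :
    α ^ 2 + β ^ 2 ≤ 4 := by
  have : Fact (0 < 2 * Real.pi) := ⟨Real.two_pi_pos⟩
  have hd : DenseRange (fun n : ℕ => n • (θ : AddCircle (2 * Real.pi))) :=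
    denseRange_zsmul_iff_nsmul.1 (AddCircle.denseRange_zsmul_coe_iff.2 hθ)
  have hcl : IsClosed {φ : Real.Angle | |α * φ.cos + β * φ.sin| ≤ 2} :=
    isClosed_le (((Real.Angle.continuous_cos.const_mul α).add
      (Real.Angle.continuous_sin.const_mul β)).abs) continuous_const
  have hall : ∀ φ : Real.Angle, |α * φ.cos + β * φ.sin| ≤ 2 := by
    intro φ
    refine hd.induction_on (p := fun φ : Real.Angle => |α * φ.cos + β * φ.sin| ≤ 2) φ hcl ?_
    intro n
    have e : (n • (θ : AddCircle (2 * Real.pi)) : Real.Angle) = ((n * θ : ℝ) : Real.Angle) := by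
      rw [← nsmul_eq_mul]; rfl
    change |α * Real.Angle.cos (n • (θ : AddCircle (2 * Real.pi)) : Real.Angle)
      + β * Real.Angle.sin (n • (θ : AddCircle (2 * Real.pi)) : Real.Angle)| ≤ 2
    rw [e, Real.Angle.cos_coe, Real.Angle.sin_coe]
    exact h n
  -- the maximum over `φ` is attained at the argument of `α + β i`
  set z : ℂ := ⟨α, β⟩ with hz
  have h1 := hall (z.arg : ℝ)
  rw [Real.Angle.cos_coe, Real.Angle.sin_coe] at h1
  have hc : ‖z‖ * Real.cos z.arg = α := Complex.norm_mul_cos_arg z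
  have hs : ‖z‖ * Real.sin z.arg = β := Complex.norm_mul_sin_arg z
  have hr : α ^ 2 + β ^ 2 = ‖z‖ ^ 2 := by
    rw [← hc, ← hs]; linear_combination ‖z‖ ^ 2 * Real.sin_sq_add_cos_sq z.arg
  have he : α * Real.cos z.arg + β * Real.sin z.arg = ‖z‖ := by
    rw [← hc, ← hs]; linear_combination ‖z‖ * Real.sin_sq_add_cos_sq z.arg
  rw [he, abs_norm] at h1
  rw [hr]
  nlinarith [norm_nonneg z]

lemma tr2_mul_mul (B D : SL2R) : tr2 (B * (B * D)) = tr2 B * tr2 (B * D) - tr2 D := by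
  have dB := B.2
  rw [Matrix.det_fin_two] at dB
  rw [tr2_mul, tr2_mul, tr2_eq, tr2_eq]
  simp only [Matrix.SpecialLinearGroup.coe_mul, Matrix.mul_apply, Fin.sum_univ_two]
  linear_combination (-(D.1 0 0) - D.1 1 1) * dB

/-- Closed form of `tr (Bⁿ C)`; the factor `sin θ` is multiplied out. -/
lemma tr2_pow_mul (B C : SL2R) {θ : ℝ} (hB : tr2 B = 2 * Real.cos θ) (n : ℕ) :
    Real.sin θ * tr2 (B ^ n * C) = Real.sin θ * tr2 C * Real.cos (n * θ) +
      (tr2 (B * C) - Real.cos θ * tr2 C) * Real.sin (n * θ) := by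
  induction n using Nat.twoStepInduction with
  | zero => simp
  | one => simp; ring
  | more n h0 h1 =>
    have e : B ^ (n + 2) * C = B * (B * (B ^ n * C)) := by
      simp only [pow_succ', mul_assoc]
    have e1 : B ^ (n + 1) * C = B * (B ^ n * C) := by
      simp only [pow_succ', mul_assoc]
    rw [e, tr2_mul_mul, ← e1, hB]
    have a1 : ((n + 1 : ℕ) : ℝ) * θ = n * θ + θ := by push_cast; ring
    have a2 : ((n + 2 : ℕ) : ℝ) * θ = (n * θ + θ) + θ := by push_cast; ring
    rw [a1] at h1
    rw [a2, Real.cos_add (n * θ + θ), Real.sin_add (n * θ + θ)]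
    have c0 : Real.cos (n * θ) = Real.cos (n * θ + θ) * Real.cos θ
        + Real.sin (n * θ + θ) * Real.sin θ := by
      rw [← Real.cos_sub]; ring_nf
    have s0 : Real.sin (n * θ) = Real.sin (n * θ + θ) * Real.cos θ
        - Real.cos (n * θ + θ) * Real.sin θ := by
      rw [← Real.sin_sub]; ring_nf
    rw [c0, s0] at h0
    linear_combination 2 * Real.cos θ * h1 - h0

lemma fricke_nonpos (B C : SL2R) {θ : ℝ} (hθ : Irrational (θ / (2 * Real.pi)))
    (hs : Real.sin θ ≠ 0) (hB : tr2 B = 2 * Real.cos θ)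
    (h : ∀ n : ℕ, |tr2 (B ^ n * C)| ≤ 2) : fricke B C ≤ 0 := by
  have key := sq_add_sq_le_of_irrational (α := tr2 C)
    (β := (tr2 (B * C) - Real.cos θ * tr2 C) / Real.sin θ) hθ (by
      intro n
      convert h n using 2
      have := tr2_pow_mul B C hB n
      field_simp
      linear_combination -this)
  have hs2 : 0 < Real.sin θ ^ 2 := by positivity
  have h2 : Real.sin θ ^ 2 * tr2 C ^ 2 + (tr2 (B * C) - Real.cos θ * tr2 C) ^ 2
      ≤ 4 * Real.sin θ ^ 2 := by
    have := mul_le_mul_of_nonneg_left key hs2.le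
    have e : Real.sin θ ^ 2 * (tr2 C ^ 2 +
        ((tr2 (B * C) - Real.cos θ * tr2 C) / Real.sin θ) ^ 2) =
        Real.sin θ ^ 2 * tr2 C ^ 2 + (tr2 (B * C) - Real.cos θ * tr2 C) ^ 2 := by
      field_simp
    linarith
  rw [Real.sin_sq] at h2
  rw [fricke, hB]
  nlinarith

/-- Only countably many values `2 cos θ` come from rational `θ / 2π`. -/
lemma exists_irrational_angle {a b : ℝ} (hab : a < b) (ha : -2 ≤ a) (hb : b ≤ 2) :
    ∃ θ : ℝ, 2 * Real.cos θ ∈ Icc a b ∧ Irrational (θ / (2 * Real.pi)) ∧ Real.sin θ ≠ 0 := by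
  have hc : (range fun q : ℚ => 2 * Real.cos (q * (2 * Real.pi))).Countable :=
    countable_range _
  obtain ⟨v, hv, hv'⟩ : ∃ v ∈ Icc a b,
      v ∉ range fun q : ℚ => 2 * Real.cos (q * (2 * Real.pi)) := by
    by_contra! h
    exact absurd (Cardinal.Real.Icc_countable_iff.1 (hc.mono h)) (not_le.2 hab)
  have hcos : Real.cos (Real.arccos (v / 2)) = v / 2 :=
    Real.cos_arccos (by linarith [hv.1]) (by linarith [hv.2])
  have hpi := Real.pi_ne_zero
  have hirr : Irrational (Real.arccos (v / 2) / (2 * Real.pi)) := by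
    rintro ⟨q, hq⟩
    refine hv' ⟨q, ?_⟩
    have : (q : ℝ) * (2 * Real.pi) = Real.arccos (v / 2) := by rw [hq]; field_simp
    simp only [this, hcos]; ring
  refine ⟨Real.arccos (v / 2), by rw [hcos]; convert hv using 1; ring, hirr, fun hs => ?_⟩
  obtain ⟨n, hn⟩ := Real.sin_eq_zero_iff.1 hs
  refine hirr ⟨(n : ℚ) / 2, ?_⟩
  rw [← hn]; push_cast; field_simp

lemma wordProd_cons_const {X : Type*} (A : X → ℝ → SL2R) (n : ℕ) (c b : X) (E : ℝ) :
    wordProd A (Fin.cons c (fun _ => b) : Fin (n + 1) → X) E = A b E ^ n * A c E := by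
  simp [wordProd, List.ofFn_succ, List.ofFn_const]

/-- If `X` is a Banach space and `A : X × ℝ → SL(2,ℝ)` is analytic and
non-ahyperbolic with exceptional set `S`, then for every `E ∉ S`, `x ∈ X`,
and `ε > 0` there is a word `y = y₁⋯y_k` with every letter within `ε` of `x`
such that `A(y,E) = A(y_k,E)⋯A(y₁,E)` is hyperbolic. -/
theorem nonAhyperbolic_word_near {X : Type*}
    [NormedAddCommGroup X] [NormedSpace ℝ X] [CompleteSpace X]
    (A : X → ℝ → SL2R)
    (hA : ∀ i j : Fin 2,
      AnalyticOnNhd ℝ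
        (fun p : X × ℝ => (A p.1 p.2 : Matrix (Fin 2) (Fin 2) ℝ) i j) Set.univ)
    (S : Set ℝ) (hNA : NonAhyperbolic A S)
    (E : ℝ) (hE : E ∉ S) (x : X) (ε : ℝ) (hε : 0 < ε) :
    ∃ k : ℕ, 0 < k ∧ ∃ y : Fin k → X,
      (∀ i, ‖y i - x‖ < ε) ∧ IsHyperbolic (wordProd A y E) := by

  by_contra! hno
  obtain ⟨y₀, hy₀⟩ := hNA.2 E hE
  set L : ℝ → X := fun t => x + t • (y₀ - x) with hL
  set M : ℝ → SL2R := fun t => A (L t) E with hM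
  have hMan : ∀ i j : Fin 2, AnalyticOnNhd ℝ (fun t => (M t).1 i j) univ := by
    intro i j t _
    have h1 : AnalyticAt ℝ (fun t : ℝ => (L t, E)) t := by
      refine AnalyticAt.prod ?_ analyticAt_const
      exact analyticAt_const.add (analyticAt_id.smul analyticAt_const)
    exact (hA i j (L t, E) trivial).comp_of_eq h1 rfl
  have htr : AnalyticOnNhd ℝ (fun t => tr2 (M t)) univ := by
    simp only [tr2_eq]
    exact (hMan 0 0).add (hMan 1 1)
  have htrB : ∀ B : SL2R, AnalyticOnNhd ℝ (fun t => tr2 (B * M t)) univ := by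
    intro B
    simp only [tr2_mul]
    exact ((analyticOnNhd_const.mul (hMan 0 0)).add (analyticOnNhd_const.mul (hMan 1 0))).add
      ((analyticOnNhd_const.mul (hMan 0 1)).add (analyticOnNhd_const.mul (hMan 1 1)))
  have hL1 : L 1 = y₀ := by simp [hL]
  have hM1 : 2 < |tr2 (M 1)| := by
    simp only [hM, hL1]; exact hy₀
  have hLc : Continuous L := by fun_prop
  obtain ⟨δ, hδ, hLδ⟩ : ∃ δ > 0, ∀ t ∈ Metric.ball (0 : ℝ) δ, ‖L t - x‖ < ε := by
    have : ∀ᶠ t in nhds (0 : ℝ), ‖L t - x‖ < ε := by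
      refine (hLc.sub continuous_const).norm.continuousAt.eventually_lt continuousAt_const ?_
      simpa [hL] using hε
    obtain ⟨δ, hδ, h⟩ := Metric.eventually_nhds_iff_ball.1 this
    exact ⟨δ, hδ, h⟩
  have hword : ∀ s ∈ Metric.ball (0 : ℝ) δ, ∀ t ∈ Metric.ball (0 : ℝ) δ, ∀ n : ℕ,
      |tr2 (M s ^ n * M t)| ≤ 2 := by
    intro s hs t ht n
    have h := hno (n + 1) n.succ_pos (Fin.cons (L t) (fun _ => L s)) (by
      intro i
      refine Fin.cases ?_ (fun j => ?_) i
      · simpa using hLδ t ht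
      · simpa using hLδ s hs)
    rw [wordProd_cons_const] at h
    exact not_lt.1 h
  have hsmall : ∀ t ∈ Metric.ball (0 : ℝ) δ, |tr2 (M t)| ≤ 2 := by
    intro t ht
    simpa using hword t ht t ht 0
  have h0 : (0 : ℝ) ∈ Metric.ball (0 : ℝ) δ := Metric.mem_ball_self hδ
  obtain ⟨t₁, ht₁, hne⟩ : ∃ t ∈ Metric.ball (0 : ℝ) δ, tr2 (M t) ≠ tr2 (M 0) := by
    by_contra! hconst
    have := htr.eq_of_eventuallyEq (g := fun _ => tr2 (M 0)) analyticOnNhd_const (z₀ := 0)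
      (Filter.eventually_of_mem (Metric.ball_mem_nhds 0 hδ) hconst)
    have h1 := congrFun this 1
    beta_reduce at h1
    rw [h1] at hM1
    exact absurd (hsmall 0 h0) (not_le.2 hM1)
  have hord : OrdConnected ((fun t => tr2 (M t)) '' Metric.ball (0 : ℝ) δ) :=
    (((convex_ball (0 : ℝ) δ).isPreconnected).image _
      (htr.continuousOn.mono (subset_univ _))).ordConnected
  obtain ⟨a, b, ha, hb, hab⟩ : ∃ a b, a ∈ (fun t => tr2 (M t)) '' Metric.ball (0 : ℝ) δ ∧
      b ∈ (fun t => tr2 (M t)) '' Metric.ball (0 : ℝ) δ ∧ a < b := by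
    rcases lt_or_gt_of_ne hne with h | h
    · exact ⟨_, _, ⟨t₁, ht₁, rfl⟩, ⟨0, h0, rfl⟩, h⟩
    · exact ⟨_, _, ⟨0, h0, rfl⟩, ⟨t₁, ht₁, rfl⟩, h⟩
  obtain ⟨θ, hθ, hirr, hsin⟩ := exists_irrational_angle hab
    (by obtain ⟨t, ht, rfl⟩ := ha; exact (abs_le.1 (hsmall t ht)).1)
    (by obtain ⟨t, ht, rfl⟩ := hb; exact (abs_le.1 (hsmall t ht)).2)
  obtain ⟨t₀, ht₀, htθ⟩ := hord.out ha hb hθ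
  simp only at htθ
  have hell : tr2 (M t₀) ^ 2 < 4 := by
    have : 0 < Real.sin θ ^ 2 := by positivity
    rw [htθ]; nlinarith [Real.sin_sq_add_cos_sq θ]
  have hell' : |tr2 (M t₀)| < 2 := abs_lt_of_sq_lt_sq (by linarith) (by norm_num)
  have hFan : AnalyticOnNhd ℝ (fun t => fricke (M t₀) (M t)) univ :=
    (((analyticOnNhd_const.add (htr.pow 2)).add ((htrB (M t₀)).pow 2)).sub
      ((analyticOnNhd_const.mul htr).mul (htrB (M t₀)))).sub analyticOnNhd_const
  have hF0 := hFan.eq_of_eventuallyEq (g := fun _ => (0 : ℝ)) analyticOnNhd_const (z₀ := 0)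
    (Filter.eventually_of_mem (Metric.ball_mem_nhds 0 hδ) fun t ht =>
      le_antisymm (fricke_nonpos _ _ hirr hsin htθ (hword t₀ ht₀ t ht)) (fricke_nonneg _ _ hell'))
  have hF1 : fricke (M t₀) (M 1) = 0 := congrFun hF0 1
  have hM1sq : 4 < tr2 (M 1) ^ 2 := by
    rw [← sq_abs]; nlinarith
  rw [fricke] at hF1
  -- completing the square in `tr (M t₀ * M 1)`
  nlinarith [sq_nonneg (2 * tr2 (M t₀ * M 1) - tr2 (M t₀) * tr2 (M 1)),
    mul_pos (sub_pos.2 hell) (sub_pos.2 hM1sq)]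
end
end

section
/- Assume Y ⊆ ℝ^k is a closed perfect set that is gap-rich with exceptional set S. For any x ∈ per(ℤ,Y) of minimal period p, any ε > 0, and any compact K ⊆ ℝ∖S, there exist constants N₀ = N₀(x,K,ε) ∈ ℕ and c₀ = c₀(x,K,ε) > 0 such that for every N ≥ N₀ there exists y ∈ per(ℤ,Y) of period Np with sup_{j∈ℤ} d(x_j, y_j) < ε and Leb(K ∩ σ(H_y)) ≤ e^{−c₀N}, where Leb denotes Lebesgue measure on ℝ. -/
/-!
The spectrum is covered by exponentially small neighbourhoods of the eigenvalues of finitely many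
finite matrices.

Gap-richness and compactness of `K` give finitely many periodic sequences `w 1, …, w m` near `x`
such that every `E ∈ K` satisfies `c ‖u‖² ≤ ‖(H_{w i} - E) u‖²` for some `i`, with one common
`c > 0` (`exists_cover`). The approximant `y` follows each `w i` on a stretch of `4 t + 3` entries,
where `t` is proportional to `N`, and equals `x` elsewhere in the period (`concat`).

Fix `E ∈ K` and the corresponding `i`. Inside the `i`-th stretch an approximate solution `u` of
`(H_y - E) u = 0` is exponentially small near the centre: if `A r` is the mass of `u` on the window
of radius `r`, testing the lower bound on the restriction of `u` to a window gives
`c A (r + 1) ≤ 2 (A (r + 2) - A r) + error`, so `A` grows geometrically (`win_step`, `win_decay`).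
Cutting `H_y` at the centres of the translates of this stretch therefore changes `(H_y - E) u` by a
relative error of order `(1 + c / 2)^(-t/2)`. If `E` is farther than this from the `q` eigenvalues of
the cut matrix (`q` the period of the aggregated potential), then `H_y - E` is bounded below
(`lowerBd_of_window`), hence invertible by self-adjointness (`not_mem_spectrum`). So
`K ∩ σ(H_y)` lies in `m q` intervals of exponentially small length, and `q` is linear in `N`.
-/

open Set MeasureTheory BoundedContinuousFunction

noncomputable section

/-! ### The operator `H_W - E` and its lower bounds -/

/-- The formal action of `H_W - E` on an arbitrary sequence `u`. -/
def schr (W : ℤ → ℝ) (E : ℝ) (u : ℤ → ℝ) : ℤ → ℝ :=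
  fun n => u (n - 1) + u (n + 1) + (W n - E) * u n

/-- The quantitative gap condition `c ‖u‖² ≤ ‖(H_W - E) u‖²` on square-summable sequences. -/
def LowerBd (W : ℤ → ℝ) (E c : ℝ) : Prop :=
  ∀ u : ℤ → ℝ, Summable (fun n => u n ^ 2) →
    c * ∑' n, u n ^ 2 ≤ ∑' n, schr W E u n ^ 2

/-- A bound on the potential, as a plain inequality. -/
def BddPot (W : ℤ → ℝ) : Prop := ∃ B : ℝ, ∀ n, |W n| ≤ B

lemma BddPot.of_periodic {V : ℤ → ℝ} {q : ℕ} (hq : 0 < q) (hV : ∀ n : ℤ, V (n + q) = V n) :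
    BddPot V := by
  have hqz : (0 : ℤ) < q := by exact_mod_cast hq
  refine ⟨∑ a ∈ Finset.range q, |V a|, fun n => ?_⟩
  have h1 : V n = V (n % q) := by
    have hp : Function.Periodic V (q : ℤ) := hV
    have := hp.int_mul (n / q) (n % q)
    rw [← this]
    congr 1
    have := Int.emod_add_mul_ediv n q
    push_cast
    linarith
  have h2 := Int.emod_nonneg n hqz.ne'
  have h3 := Int.emod_lt_of_pos n hqz
  have h4 : ((n % (q : ℤ)).toNat : ℤ) = n % q := Int.toNat_of_nonneg h2
  rw [h1, ← h4]
  exact Finset.single_le_sum (f := fun a : ℕ => |V a|) (fun _ _ => abs_nonneg _)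
    (Finset.mem_range.2 (by omega))

lemma summable_shift {h : ℤ → ℝ} (hh : Summable h) (a : ℤ) : Summable (fun n => h (n + a)) :=
  (Equiv.addRight a).summable_iff.2 hh

lemma tsum_shift (h : ℤ → ℝ) (a : ℤ) : ∑' n, h (n + a) = ∑' n, h n :=
  (Equiv.addRight a).tsum_eq h

lemma summable_schr {W : ℤ → ℝ} (hW : BddPot W) (E : ℝ) {u : ℤ → ℝ}
    (hu : Summable (fun n => u n ^ 2)) : Summable (fun n => schr W E u n ^ 2) := by
  obtain ⟨B, hB⟩ := hW
  have h1 := summable_shift hu (-1)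
  have h2 := summable_shift hu 1
  refine Summable.of_nonneg_of_le (fun _ => sq_nonneg _) (fun n => ?_)
    (((h1.add h2).add (hu.mul_left ((B + |E|) ^ 2))).mul_left 3)
  have h3 : ((W n - E) * u n) ^ 2 ≤ (B + |E|) ^ 2 * u n ^ 2 := by
    rw [mul_pow]
    gcongr ?_ * _
    rw [← sq_abs]
    gcongr
    exact (abs_sub _ _).trans (by linarith [hB n])
  simp only [schr, ← sub_eq_add_neg]
  nlinarith [sq_nonneg (u (n - 1) - u (n + 1)), sq_nonneg (u (n - 1) - (W n - E) * u n),
    sq_nonneg (u (n + 1) - (W n - E) * u n)]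

lemma memlp_iff (u : ℤ → ℝ) :
    Memℓp (E := fun _ : ℤ => ℝ) u 2 ↔ Summable (fun n => u n ^ 2) := by
  rw [memℓp_gen_iff (by norm_num)]
  simp

lemma ell2_summable (f : Ell2) : Summable (fun n => f n ^ 2) := (memlp_iff _).1 (lp.memℓp f)

lemma ell2_norm_sq (f : Ell2) : ‖f‖ ^ 2 = ∑' n, f n ^ 2 := by
  have := lp.norm_rpow_eq_tsum (p := 2) (by norm_num) f
  simpa using this

/-- `H_W - E` as a linear endomorphism of `ℓ²(ℤ)`, for a bounded potential. -/
def schrLin (W : ℤ → ℝ) (hW : BddPot W) (E : ℝ) : Ell2 →ₗ[ℝ] Ell2 where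
  toFun f := ⟨schr W E f, (memlp_iff _).2 (summable_schr hW E (ell2_summable f))⟩
  map_add' f g := by
    ext n
    simp only [schr, lp.coeFn_add, Pi.add_apply]
    ring
  map_smul' a f := by
    ext n
    simp only [schr, lp.coeFn_smul, Pi.smul_apply, smul_eq_mul, RingHom.id_apply]
    ring

lemma schrLin_apply (W : ℤ → ℝ) (hW : BddPot W) (E : ℝ) (f : Ell2) (n : ℤ) :
    schrLin W hW E f n = schr W E f n := rfl

lemma summable_mul {u v : ℤ → ℝ} (hu : Summable (fun n => u n ^ 2))
    (hv : Summable (fun n => v n ^ 2)) : Summable (fun n => u n * v n) := by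
  refine Summable.of_norm_bounded (hu.add hv) (fun n => ?_)
  rw [Real.norm_eq_abs, abs_le]
  constructor <;> nlinarith [sq_nonneg (u n - v n), sq_nonneg (u n + v n)]

lemma schrLin_symm (W : ℤ → ℝ) (hW : BddPot W) (E : ℝ) : (schrLin W hW E).IsSymmetric := by
  intro f g
  have hf := ell2_summable f
  have hg := ell2_summable g
  rw [lp.inner_eq_tsum, lp.inner_eq_tsum]
  simp only [schrLin_apply, RCLike.inner_apply, conj_trivial]
  -- The difference of the two summands telescopes: it is a finite difference of the Wronskian `A`.
  set A : ℤ → ℝ := fun n => f (n + -1) * g n - f n * g (n + -1) with hA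
  have hAs : Summable A :=
    (summable_mul (u := fun n => f (n + -1)) (v := fun n => g n)
      (summable_shift hf (-1)) hg).sub
    (summable_mul (u := fun n => f n) (v := fun n => g (n + -1)) hf (summable_shift hg (-1)))
  have hs1 : Summable (fun n => g n * schr W E f n) := summable_mul hg (summable_schr hW E hf)
  have hs2 : Summable (fun n => schr W E g n * f n) := summable_mul (summable_schr hW E hg) hf
  rw [← sub_eq_zero, ← hs1.tsum_sub hs2]
  have h : ∀ n, g n * schr W E f n - schr W E g n * f n = A n - A (n + 1) := by
    intro n
    simp only [schr, hA, ← sub_eq_add_neg, add_sub_cancel_right]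
    ring
  simp_rw [h]
  rw [hAs.tsum_sub (summable_shift hAs 1), tsum_shift, sub_self]

lemma exists_lowerBd {W : ℤ → ℝ} (hW : BddPot W) {E : ℝ} (hE : E ∉ SchrodingerSpectrum W) :
    ∃ c : ℝ, 0 < c ∧ LowerBd W E c := by
  simp only [SchrodingerSpectrum, mem_ofPred_eq, not_not] at hE
  obtain ⟨T, hT⟩ := hE
  have hTe : ⇑T = schrLin W hW E := by
    ext f n
    exact hT f n
  have hc : Continuous T := by
    rw [hTe]
    exact (schrLin_symm W hW E).continuous
  let e := T.toContinuousLinearEquivOfContinuous hc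
  obtain ⟨C, hC0, hC⟩ : ∃ C : ℝ, 0 < C ∧ ∀ f : Ell2, ‖f‖ ≤ C * ‖T f‖ := by
    refine ⟨‖(e.symm : Ell2 →L[ℝ] Ell2)‖ + 1, by positivity, fun f => ?_⟩
    have h := (e.symm : Ell2 →L[ℝ] Ell2).le_opNorm (e f)
    simp only [ContinuousLinearEquiv.coe_coe, ContinuousLinearEquiv.symm_apply_apply] at h
    have h2 : e f = T f := rfl
    rw [h2] at h
    nlinarith [norm_nonneg (T f)]
  refine ⟨(C ^ 2)⁻¹, by positivity, fun u hu => ?_⟩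
  let f : Ell2 := ⟨u, (memlp_iff u).2 hu⟩
  have h1 : ‖f‖ ^ 2 = ∑' n, u n ^ 2 := ell2_norm_sq f
  have h2 : ‖T f‖ ^ 2 = ∑' n, schr W E u n ^ 2 := by
    rw [hTe]
    exact ell2_norm_sq _
  rw [← h1, ← h2, inv_mul_le_iff₀ (by positivity), ← mul_pow]
  gcongr
  exact hC f

/-- A bounded self-adjoint operator that is bounded below is bijective. -/
lemma not_mem_spectrum_s11 {W : ℤ → ℝ} (hW : BddPot W) {E c : ℝ} (hc : 0 < c)
    (h : LowerBd W E c) : E ∉ SchrodingerSpectrum W := by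
  simp only [SchrodingerSpectrum, mem_ofPred_eq, not_not]
  set T := schrLin W hW E with hTdef
  have hsym := schrLin_symm W hW E
  let T' : Ell2 →L[ℝ] Ell2 := ⟨T, hsym.continuous⟩
  have hb : ∀ f : Ell2, ‖f‖ ≤ (Real.sqrt c)⁻¹ * ‖T f‖ := by
    intro f
    have h1 := h f (ell2_summable f)
    rw [← ell2_norm_sq f] at h1
    have h2 : ‖T f‖ ^ 2 = ∑' n, schr W E f n ^ 2 := ell2_norm_sq _
    rw [← h2] at h1
    rw [le_inv_mul_iff₀ (by positivity)]
    refine le_of_sq_le_sq ?_ (norm_nonneg _)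
    rw [mul_pow, Real.sq_sqrt hc.le]
    exact h1
  have hanti : AntilipschitzWith (Real.toNNReal (Real.sqrt c)⁻¹) T' := by
    refine T'.antilipschitz_of_bound fun f => ?_
    rw [Real.coe_toNNReal _ (by positivity)]
    exact hb f
  have hker : LinearMap.ker T = ⊥ := by
    rw [LinearMap.ker_eq_bot]
    exact hanti.injective
  have hcl : IsClosed (LinearMap.range T : Set Ell2) := by
    rw [LinearMap.coe_range]
    exact hanti.isClosed_range T'.uniformContinuous
  have : CompleteSpace (LinearMap.range T) := hcl.completeSpace_coe
  have hran : LinearMap.range T = ⊤ := by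
    rw [← Submodule.orthogonal_eq_bot_iff, eq_bot_iff]
    intro g hg
    rw [Submodule.mem_orthogonal] at hg
    have h0 : T g = 0 := by
      have := hg (T (T g)) ⟨_, rfl⟩
      rw [hsym (T g) g] at this
      exact inner_self_eq_zero.1 this
    rw [← hker]
    exact h0
  exact ⟨LinearEquiv.ofBijective T ⟨LinearMap.ker_eq_bot.1 hker, LinearMap.range_eq_top.1 hran⟩,
    fun f n => rfl⟩

/-- Lower bounds persist, with a worse constant, on a neighbourhood of the energy. -/
lemma LowerBd.near {W : ℤ → ℝ} (hW : BddPot W) {E E' c : ℝ} (h : LowerBd W E c)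
    (hE : (E' - E) ^ 2 ≤ c / 4) : LowerBd W E' (c / 4) := by
  intro u hu
  have hs := summable_schr hW E hu
  have hs' := summable_schr hW E' hu
  have h1 : ∑' n, schr W E u n ^ 2 ≤
      2 * ∑' n, schr W E' u n ^ 2 + 2 * (E' - E) ^ 2 * ∑' n, u n ^ 2 := by
    rw [← tsum_mul_left, ← tsum_mul_left, ← (hs'.mul_left 2).tsum_add (hu.mul_left _)]
    refine hs.tsum_le_tsum (fun n => ?_) ((hs'.mul_left 2).add (hu.mul_left _))
    have : schr W E u n = schr W E' u n + (E' - E) * u n := by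
      simp only [schr]; ring
    rw [this]
    nlinarith [sq_nonneg (schr W E' u n - (E' - E) * u n)]
  have h2 := h u hu
  have h3 : 0 ≤ ∑' n, u n ^ 2 := tsum_nonneg fun _ => sq_nonneg _
  nlinarith

lemma LowerBd.mono {W : ℤ → ℝ} {E c c' : ℝ} (h : LowerBd W E c) (hc : c' ≤ c) :
    LowerBd W E c' := fun u hu =>
  (mul_le_mul_of_nonneg_right hc (tsum_nonneg fun _ => sq_nonneg _)).trans (h u hu)

/-! ### Exponential growth across a window -/

/-- The sum of `F` over the integer window of radius `r` around `a`. -/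
def win (F : ℤ → ℝ) (a : ℤ) (r : ℕ) : ℝ := ∑ n ∈ Finset.Icc (a - r) (a + r), F n

lemma win_succ (F : ℤ → ℝ) (a : ℤ) (r : ℕ) :
    win F a (r + 1) = F (a - (r + 1)) + F (a + (r + 1)) + win F a r := by
  have h : Finset.Icc (a - ((r + 1 : ℕ) : ℤ)) (a + ((r + 1 : ℕ) : ℤ)) =
      insert (a - (r + 1)) (insert (a + (r + 1)) (Finset.Icc (a - (r : ℤ)) (a + r))) := by
    ext n
    simp only [Finset.mem_Icc, Finset.mem_insert]
    omega
  rw [win, h, Finset.sum_insert, Finset.sum_insert, win, add_assoc]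
  · simp
  · simp only [Finset.mem_Icc, Finset.mem_insert]
    omega

lemma win_nonneg {F : ℤ → ℝ} (hF : ∀ n, 0 ≤ F n) (a : ℤ) (r : ℕ) : 0 ≤ win F a r :=
  Finset.sum_nonneg fun n _ => hF n

lemma win_mono {F : ℤ → ℝ} (hF : ∀ n, 0 ≤ F n) (a : ℤ) {r s : ℕ} (h : r ≤ s) :
    win F a r ≤ win F a s :=
  Finset.sum_le_sum_of_subset_of_nonneg (Finset.Icc_subset_Icc (by omega) (by omega))
    fun n _ _ => hF n

/-- Testing the lower bound for `H_W - E` on `u` restricted to a window: only `(H_V - E) u` inside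
the window and the values of `u` at the four boundary sites contribute. -/
lemma win_step {V W : ℤ → ℝ} {E c : ℝ} (h : LowerBd W E c) (a : ℤ) (r : ℕ)
    (hVW : ∀ n : ℤ, a - (r + 1) ≤ n → n ≤ a + (r + 1) → V n = W n) (u : ℤ → ℝ) :
    c * win (fun n => u n ^ 2) a (r + 1) ≤
      2 * win (fun n => schr V E u n ^ 2) a (r + 1) +
        2 * (win (fun n => u n ^ 2) a (r + 2) - win (fun n => u n ^ 2) a r) := by
  set v : ℤ → ℝ := fun n => if a - (r + 1) ≤ n ∧ n ≤ a + (r + 1) then u n else 0 with hv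
  have hvin : ∀ n : ℤ, a - (r + 1) ≤ n → n ≤ a + (r + 1) → v n = u n :=
    fun n h1 h2 => if_pos ⟨h1, h2⟩
  have hvout : ∀ n : ℤ, ¬ (a - (r + 1) ≤ n ∧ n ≤ a + (r + 1)) → v n = 0 := fun n h1 => if_neg h1
  have hv0 : ∀ n ∉ Finset.Icc (a - ((r + 1 : ℕ) : ℤ)) (a + ((r + 1 : ℕ) : ℤ)), v n ^ 2 = 0 := by
    intro n hn
    rw [Finset.mem_Icc] at hn
    rw [hvout n (by push_cast at hn; exact hn)]
    simp
  have hs0 : ∀ n ∉ Finset.Icc (a - ((r + 2 : ℕ) : ℤ)) (a + ((r + 2 : ℕ) : ℤ)),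
      schr W E v n ^ 2 = 0 := by
    intro n hn
    rw [Finset.mem_Icc] at hn
    push_cast at hn
    rw [schr, hvout n (by omega), hvout (n - 1) (by omega), hvout (n + 1) (by omega)]
    simp
  have hmain := h v (summable_of_ne_finset_zero hv0)
  rw [tsum_eq_sum hv0, tsum_eq_sum hs0] at hmain
  change c * win (fun n => v n ^ 2) a (r + 1) ≤ win (fun n => schr W E v n ^ 2) a (r + 2) at hmain
  have e1 : win (fun n => v n ^ 2) a (r + 1) = win (fun n => u n ^ 2) a (r + 1) := by
    refine Finset.sum_congr rfl fun n hn => ?_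
    rw [Finset.mem_Icc] at hn
    push_cast at hn
    simp only [hvin n hn.1 hn.2]
  have e2 : win (fun n => schr W E v n ^ 2) a r = win (fun n => schr V E u n ^ 2) a r := by
    refine Finset.sum_congr rfl fun n hn => ?_
    rw [Finset.mem_Icc] at hn
    simp only [schr, hvin n (by omega) (by omega), hvin (n - 1) (by omega) (by omega),
      hvin (n + 1) (by omega) (by omega), hVW n (by omega) (by omega)]
  have e3 : schr W E v (a - (r + 1)) = schr V E u (a - (r + 1)) - u (a - (r + 2)) := by
    simp only [schr, hvin (a - (r + 1)) (by omega) (by omega),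
      hvout (a - (r + 1) - 1) (by omega),
      hvin (a - (r + 1) + 1) (by omega) (by omega), hVW (a - (r + 1)) (by omega) (by omega)]
    rw [show a - ((r : ℤ) + 1) - 1 = a - (r + 2) by ring]
    ring
  have e4 : schr W E v (a + (r + 1)) = schr V E u (a + (r + 1)) - u (a + (r + 2)) := by
    simp only [schr, hvin (a + (r + 1)) (by omega) (by omega),
      hvout (a + (r + 1) + 1) (by omega),
      hvin (a + (r + 1) - 1) (by omega) (by omega), hVW (a + (r + 1)) (by omega) (by omega)]
    rw [show a + ((r : ℤ) + 1) + 1 = a + (r + 2) by ring]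
    ring
  have e5 : schr W E v (a - (r + 2)) = u (a - (r + 1)) := by
    simp only [schr, hvout (a - (r + 2)) (by omega), hvout (a - (r + 2) - 1) (by omega)]
    rw [show a - ((r : ℤ) + 2) + 1 = a - (r + 1) by ring, hvin _ (by omega) (by omega)]
    ring
  have e6 : schr W E v (a + (r + 2)) = u (a + (r + 1)) := by
    simp only [schr, hvout (a + (r + 2)) (by omega), hvout (a + (r + 2) + 1) (by omega)]
    rw [show a + ((r : ℤ) + 2) - 1 = a + (r + 1) by ring, hvin _ (by omega) (by omega)]
    ring
  have hcast : (((r + 1 : ℕ) : ℤ) + 1) = (r : ℤ) + 2 := by push_cast; ring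
  rw [e1, win_succ (fun n => schr W E v n ^ 2) a (r + 1),
    win_succ (fun n => schr W E v n ^ 2) a r, hcast, e2] at hmain
  simp only [e3, e4, e5, e6] at hmain
  rw [win_succ (fun n => u n ^ 2) a (r + 1), win_succ (fun n => schr V E u n ^ 2) a r, hcast]
  have e7 := win_succ (fun n => u n ^ 2) a r
  have e8 : 0 ≤ win (fun n => schr V E u n ^ 2) a r := win_nonneg (fun n => sq_nonneg _) a r
  beta_reduce at e7 ⊢
  nlinarith [sq_nonneg (schr V E u (a - (r + 1)) + u (a - (r + 2))),
    sq_nonneg (schr V E u (a + (r + 1)) + u (a + (r + 2))), sq_nonneg (u (a - (r + 1))),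
    sq_nonneg (u (a + (r + 1)))]

/-- Inside a window where the potential has a gap at `E`, an approximate solution of
`(H_V - E) u = 0` is exponentially small near the centre. -/
lemma win_decay {V W : ℤ → ℝ} {E c : ℝ} (hc : 0 < c) (h : LowerBd W E c) (a : ℤ) (u : ℤ → ℝ)
    (t : ℕ) (hVW : ∀ n : ℤ, a - (2 * t + 1 : ℕ) ≤ n → n ≤ a + (2 * t + 1 : ℕ) → V n = W n) :
    win (fun n => u n ^ 2) a 1 ≤
      (1 + c / 2)⁻¹ ^ t * win (fun n => u n ^ 2) a (2 * t + 1) +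
        t * win (fun n => schr V E u n ^ 2) a (2 * t + 1) := by
  set θ : ℝ := (1 + c / 2)⁻¹ with hθ
  have hθ0 : 0 ≤ θ := by positivity
  have hθ1 : θ ≤ 1 := inv_le_one_of_one_le₀ (by linarith)
  induction t with
  | zero => simp
  | succ t ih =>
    specialize ih fun n h1 h2 => hVW n (by push_cast at *; omega) (by push_cast at *; omega)
    have hs := win_step (V := V) h a (2 * t + 1)
      (fun n h1 h2 => hVW n (by push_cast at *; omega) (by push_cast at *; omega)) u
    have hsq : ∀ n, 0 ≤ (fun n => u n ^ 2) n := fun n => sq_nonneg _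
    have hgq : ∀ n, 0 ≤ (fun n => schr V E u n ^ 2) n := fun n => sq_nonneg _
    have m1 := win_mono hsq a (show 2 * t + 1 ≤ 2 * t + 1 + 1 by omega)
    have m2 := win_mono hgq a (show 2 * t + 1 + 1 ≤ 2 * (t + 1) + 1 by omega)
    have m3 := win_mono hgq a (show 2 * t + 1 ≤ 2 * (t + 1) + 1 by omega)
    rw [show 2 * t + 1 + 2 = 2 * (t + 1) + 1 by ring] at hs
    set A := win (fun n => u n ^ 2) a (2 * t + 1)
    set A' := win (fun n => u n ^ 2) a (2 * (t + 1) + 1)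
    set G := win (fun n => schr V E u n ^ 2) a (2 * t + 1)
    set G' := win (fun n => schr V E u n ^ 2) a (2 * (t + 1) + 1) with hG'
    have hG0 : 0 ≤ G' := win_nonneg hgq a _
    have key : A ≤ θ * (A' + G') := by
      rw [hθ, le_inv_mul_iff₀ (by positivity)]
      nlinarith
    have hp1 : θ ^ (t + 1) ≤ 1 := pow_le_one₀ hθ0 hθ1
    calc win (fun n => u n ^ 2) a 1 ≤ θ ^ t * A + t * G := ih
      _ ≤ θ ^ t * (θ * (A' + G')) + t * G' := by gcongr
      _ = θ ^ (t + 1) * A' + θ ^ (t + 1) * G' + t * G' := by ring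
      _ ≤ θ ^ (t + 1) * A' + 1 * G' + t * G' := by gcongr
      _ = _ := by push_cast; ring

/-! ### Cutting the operator into finite blocks -/

/-- The Dirichlet restriction of `H_V` to the `q` sites `a, …, a + q - 1`. -/
def cutMat (V : ℤ → ℝ) (a : ℤ) (q : ℕ) : Matrix (Fin q) (Fin q) ℝ := fun i j =>
  (if (j : ℕ) + 1 = i then 1 else 0) + (if (i : ℕ) + 1 = j then 1 else 0) +
    (if i = j then V (a + i) else 0)

lemma cutMat_symm (V : ℤ → ℝ) (a : ℤ) (q : ℕ) :
    (Matrix.toEuclideanLin (cutMat V a q)).IsSymmetric := by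
  rw [Matrix.isSymmetric_toEuclideanLin_iff]
  ext i j
  simp only [Matrix.conjTranspose_apply, cutMat, star_trivial]
  by_cases h : i = j
  · subst h; ring
  · rw [if_neg h, if_neg (Ne.symm h)]; ring

/-- The eigenvalues of the Dirichlet restriction. -/
def cutEig (V : ℤ → ℝ) (a : ℤ) (q : ℕ) : Fin q → ℝ :=
  (cutMat_symm V a q).eigenvalues (finrank_euclideanSpace_fin (𝕜 := ℝ) (n := q))

/-- Holds by expansion in an orthonormal eigenbasis of the cut matrix. -/
lemma cut_lower (V : ℤ → ℝ) (a : ℤ) (q : ℕ) {E δ : ℝ} (hδ : 0 ≤ δ)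
    (hE : ∀ i, δ ≤ |E - cutEig V a q i|) (v : Fin q → ℝ) :
    δ ^ 2 * ∑ i, v i ^ 2 ≤ ∑ i, ((cutMat V a q).mulVec v i - E * v i) ^ 2 := by
  set T := Matrix.toEuclideanLin (cutMat V a q) with hT
  set b := (cutMat_symm V a q).eigenvectorBasis (finrank_euclideanSpace_fin (𝕜 := ℝ) (n := q))
    with hb
  let x : EuclideanSpace ℝ (Fin q) := WithLp.toLp 2 v
  have h1 : ∑ i, v i ^ 2 = ‖b.repr x‖ ^ 2 := by
    rw [LinearIsometryEquiv.norm_map, EuclideanSpace.norm_sq_eq]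
    simp [x]
  have h2 : ∑ i, ((cutMat V a q).mulVec v i - E * v i) ^ 2 = ‖b.repr (T x - E • x)‖ ^ 2 := by
    rw [LinearIsometryEquiv.norm_map, EuclideanSpace.norm_sq_eq]
    simp [x, T, Matrix.toEuclideanLin, Matrix.toLpLin_apply]
  rw [h1, h2, EuclideanSpace.norm_sq_eq, EuclideanSpace.norm_sq_eq, Finset.mul_sum]
  refine Finset.sum_le_sum fun i _ => ?_
  have h3 : (b.repr (T x - E • x)) i = (cutEig V a q i - E) * b.repr x i := by
    have := (cutMat_symm V a q).eigenvectorBasis_apply_self_apply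
      (finrank_euclideanSpace_fin (𝕜 := ℝ) (n := q)) x i
    rw [map_sub, map_smul]
    simp only [PiLp.sub_apply, PiLp.smul_apply, smul_eq_mul]
    rw [hb, hT, this]
    simp only [cutEig, RCLike.ofReal_real_eq_id, id]
    ring
  rw [h3, norm_mul, mul_pow]
  gcongr
  rw [Real.norm_eq_abs, abs_sub_comm]
  exact hE i

lemma sum_pred (q : ℕ) (i : Fin q) (v : ℤ → ℝ) :
    ∑ j : Fin q, (if (j : ℕ) + 1 = i then v j else 0) =
      if (i : ℕ) = 0 then 0 else v ((i : ℤ) - 1) := by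
  split_ifs with h
  · exact Finset.sum_eq_zero fun j _ => if_neg (by omega)
  · rw [Finset.sum_eq_single ⟨i - 1, by omega⟩]
    · rw [if_pos (by simp; omega)]
      congr 1
      simp only
      omega
    · intro j _ hj
      refine if_neg fun h' => hj (Fin.ext ?_)
      simp only
      omega
    · simp

lemma sum_succ (q : ℕ) (i : Fin q) (v : ℤ → ℝ) :
    ∑ j : Fin q, (if (i : ℕ) + 1 = j then v j else 0) =
      if (i : ℕ) + 1 = q then 0 else v ((i : ℤ) + 1) := by
  split_ifs with h
  · exact Finset.sum_eq_zero fun j _ => if_neg (by omega)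
  · rw [Finset.sum_eq_single ⟨i + 1, by omega⟩]
    · rw [if_pos (by simp)]
      congr 1
    · intro j _ hj
      refine if_neg fun h' => hj (Fin.ext ?_)
      simp only
      omega
    · simp

lemma cutMat_mulVec (V : ℤ → ℝ) (a : ℤ) (q : ℕ) (E : ℝ) (u : ℤ → ℝ) (i : Fin q) :
    (cutMat V a q).mulVec (fun j => u (a + j)) i - E * u (a + i) =
      schr V E u (a + i) - (if (i : ℕ) = 0 then u (a - 1) else 0) -
        (if (i : ℕ) + 1 = q then u (a + q) else 0) := by
  have h1 := sum_pred q i (fun n => u (a + n))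
  have h2 := sum_succ q i (fun n => u (a + n))
  simp only [Matrix.mulVec, dotProduct, cutMat, add_mul, Finset.sum_add_distrib, ite_mul, one_mul,
    zero_mul, Finset.sum_ite_eq, Finset.mem_univ, if_true]
  rw [h1, h2]
  have h3 : a + (i : ℤ) - 1 = a + (i - 1) := by ring
  have h4 : a + (i : ℤ) + 1 = a + (i + 1) := by ring
  simp only [schr, h3, h4]
  split_ifs with h5 h6 h6
  · rw [show a + ((i : ℤ) - 1) = a - 1 by omega, show a + ((i : ℤ) + 1) = a + q by omega]
    ring
  · rw [show a + ((i : ℤ) - 1) = a - 1 by omega]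
    ring
  · rw [show a + ((i : ℤ) + 1) = a + q by omega]
    ring
  · ring

/-- Lower bound on one cell, up to the contribution of the two sites adjacent to it. -/
lemma cell_bound (V : ℤ → ℝ) (a : ℤ) {q : ℕ} (hq : 0 < q) {E δ : ℝ} (hδ : 0 ≤ δ)
    (hE : ∀ i, δ ≤ |E - cutEig V a q i|) (u : ℤ → ℝ) :
    δ ^ 2 * ∑ i : Fin q, u (a + i) ^ 2 ≤
      3 * ∑ i : Fin q, schr V E u (a + i) ^ 2 + 3 * u (a - 1) ^ 2 + 3 * u (a + q) ^ 2 := by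
  refine (cut_lower V a q hδ hE (fun i => u (a + i))).trans ?_
  have h1 : ∀ i : Fin q, ((cutMat V a q).mulVec (fun j => u (a + j)) i - E * u (a + i)) ^ 2 ≤
      3 * schr V E u (a + i) ^ 2 + (if i = ⟨0, hq⟩ then 3 * u (a - 1) ^ 2 else 0) +
        (if i = ⟨q - 1, by omega⟩ then 3 * u (a + q) ^ 2 else 0) := by
    intro i
    rw [cutMat_mulVec]
    have e1 : (i = ⟨0, hq⟩) ↔ (i : ℕ) = 0 := by rw [Fin.ext_iff]
    have e2 : (i = ⟨q - 1, by omega⟩) ↔ (i : ℕ) + 1 = q := by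
      rw [Fin.ext_iff]
      simp only
      omega
    simp only [e1, e2]
    generalize schr V E u (a + i) = g
    split_ifs
    · nlinarith [sq_nonneg (g + u (a - 1)), sq_nonneg (g + u (a + q)),
        sq_nonneg (u (a - 1) - u (a + q))]
    · nlinarith [sq_nonneg (g + u (a - 1)), sq_nonneg g, sq_nonneg (u (a - 1))]
    · nlinarith [sq_nonneg (g + u (a + q)), sq_nonneg g, sq_nonneg (u (a + q))]
    · nlinarith [sq_nonneg g]
  refine (Finset.sum_le_sum fun i _ => h1 i).trans (le_of_eq ?_)
  rw [Finset.sum_add_distrib, Finset.sum_add_distrib, ← Finset.mul_sum]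
  simp

lemma hasSum_cells {q : ℕ} (hq : 0 < q) {h : ℤ → ℝ} (hh : Summable h) (b : ℤ) :
    HasSum (fun j : ℤ => ∑ i : Fin q, h (b + i + j * q)) (∑' n, h n) := by
  have : NeZero q := ⟨hq.ne'⟩
  let e : ℤ × Fin q ≃ ℤ := (Int.divModEquiv q).symm.trans (Equiv.addLeft b)
  have h1 : HasSum (h ∘ e) (∑' n, h n) := e.hasSum_iff.2 hh.hasSum
  refine (h1.prod_fiberwise fun j => hasSum_fintype _).congr_fun fun j => ?_
  refine Finset.sum_congr rfl fun i _ => ?_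
  simp only [Function.comp_apply, e, Int.divModEquiv, Equiv.trans_apply, Equiv.coe_fn_symm_mk,
    Equiv.coe_addLeft]
  congr 1
  ring

lemma win_le_cell {F : ℤ → ℝ} (hF : ∀ n, 0 ≤ F n) (a : ℤ) {r q : ℕ} (h : 2 * r + 1 ≤ q) :
    win F a r ≤ ∑ i : Fin q, F (a - r + i) := by
  have hinj : Set.InjOn (fun i : Fin q => a - (r : ℤ) + i) (Finset.univ : Finset (Fin q)) := by
    intro i _ j _ hij
    simp only [add_right_inj, Nat.cast_inj] at hij
    exact Fin.ext hij
  rw [← Finset.sum_image (f := F) hinj]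
  refine Finset.sum_le_sum_of_subset_of_nonneg (fun n hn => ?_) fun n _ _ => hF n
  rw [Finset.mem_Icc] at hn
  rw [Finset.mem_image]
  exact ⟨⟨(n - (a - r)).toNat, by omega⟩, Finset.mem_univ _, by simp only; omega⟩

lemma schr_shift {V : ℤ → ℝ} {s : ℤ} (hV : ∀ n, V (n + s) = V n) (E : ℝ) (u : ℤ → ℝ) (n : ℤ) :
    schr V E (fun n => u (n + s)) n = schr V E u (n + s) := by
  simp only [schr, hV]
  rw [show n - 1 + s = n + s - 1 by ring, show n + 1 + s = n + s + 1 by ring]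

/-- Let `V` be `q`-periodic and agree on a window of radius `2 t + 1` with a potential `W` that has
a gap at `E`. If `E` is far, on the scale `(1 + c / 2)^(-t/2)`, from the eigenvalues of the operator
cut at the centre of the window, then `H_V` has a gap at `E`. -/
lemma lowerBd_of_window {V W : ℤ → ℝ} {q : ℕ} (hV : ∀ n : ℤ, V (n + q) = V n)
    {E c δ : ℝ} (hc : 0 < c) (hW : LowerBd W E c) (a : ℤ) (t : ℕ) (htq : 2 * (2 * t + 1) + 1 ≤ q)
    (hVW : ∀ n : ℤ, a - (2 * t + 1 : ℕ) ≤ n → n ≤ a + (2 * t + 1 : ℕ) → V n = W n)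
    (hδ : 0 ≤ δ) (hδ2 : δ ^ 2 = 4 * (1 + c / 2)⁻¹ ^ t) (hE : ∀ i, δ ≤ |E - cutEig V a q i|) :
    LowerBd V E ((1 + c / 2)⁻¹ ^ t / (3 + 3 * t)) := by
  intro u hu
  have hq : 0 < q := by omega
  set ρ : ℝ := (1 + c / 2)⁻¹ ^ t with hρ
  have hρ0 : 0 < ρ := by positivity
  have hg := summable_schr (BddPot.of_periodic hq hV) E hu
  have hVj : ∀ (j n : ℤ), V (n + j * q) = V n := by
    intro j n
    have hp : Function.Periodic V (q : ℤ) := hV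
    have := hp.int_mul j n
    simpa using this
  set S := ∑' n, u n ^ 2 with hS
  set G := ∑' n, schr V E u n ^ 2 with hG
  have sP := hasSum_cells hq hu a
  have sQ := hasSum_cells hq hg a
  have sA := hasSum_cells hq hu (a - (2 * t + 1 : ℕ))
  have sB := hasSum_cells hq hg (a - (2 * t + 1 : ℕ))
  have hinj : ∀ b : ℤ, Function.Injective (fun j : ℤ => b + j * q) := by
    intro b i j hij
    simpa [hq.ne'] using hij
  have sy : Summable (fun j : ℤ => u (a - 1 + j * q) ^ 2) := hu.comp_injective (hinj (a - 1))
  have sz : Summable (fun j : ℤ => u (a + j * q) ^ 2) := hu.comp_injective (hinj a)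
  have sz1 := summable_shift sz 1
  have tz1 := tsum_shift (fun j : ℤ => u (a + j * q) ^ 2) 1
  -- Lower bound on each cell, summed over all cells.
  have i1 : δ ^ 2 * S ≤ 3 * G + 3 * (∑' j : ℤ, u (a - 1 + j * q) ^ 2) +
      3 * (∑' j : ℤ, u (a + j * q) ^ 2) := by
    rw [← tz1]
    refine hasSum_le (fun j => ?_) (sP.mul_left (δ ^ 2))
      (((sQ.mul_left 3).add (sy.hasSum.mul_left 3)).add (sz1.hasSum.mul_left 3))
    have := cell_bound V a hq hδ hE (fun n => u (n + j * q))
    simp only [schr_shift (hVj j)] at this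
    rw [show a + (q : ℤ) + j * q = a + (j + 1) * q by ring] at this
    exact this
  -- Decay inside each translate of the window, summed over all translates.
  have i2 : (∑' j : ℤ, u (a - 1 + j * q) ^ 2) + (∑' j : ℤ, u (a + j * q) ^ 2) ≤
      ρ * S + t * G := by
    refine hasSum_le (fun j => ?_) (sy.hasSum.add sz.hasSum)
      ((sA.mul_left ρ).add (sB.mul_left (t : ℝ)))
    have d1 := win_decay (V := V) hc hW a (fun n => u (n + j * q)) t hVW
    have d2 := win_le_cell (F := fun n => u (n + j * q) ^ 2) (fun _ => sq_nonneg _) a htq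
    have d3 := win_le_cell (F := fun n => schr V E (fun n => u (n + j * q)) n ^ 2)
      (fun _ => sq_nonneg _) a htq
    have d4 := win_succ (fun n => u (n + j * q) ^ 2) a 0
    have d5 : win (fun n => u (n + j * q) ^ 2) a 0 = u (a + j * q) ^ 2 := by simp [win]
    simp only [Nat.cast_zero, zero_add] at d4
    rw [d4, d5] at d1
    have d6 := mul_le_mul_of_nonneg_left d2 hρ0.le
    have d7 := mul_le_mul_of_nonneg_left d3 (Nat.cast_nonneg (α := ℝ) t)
    simp only [schr_shift (hVj j)] at d1 d3 d7
    have d8 : 0 ≤ u (a + 1 + j * q) ^ 2 := sq_nonneg _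
    linarith
  rw [hδ2] at i1
  rw [div_mul_eq_mul_div, div_le_iff₀ (by positivity)]
  nlinarith

/-! ### Periodic sequences of blocks -/

lemma agg_congr {k : ℕ} (hk : 0 < k) {z z' : ℤ → (Fin k → ℝ)} {n n' : ℤ}
    (h1 : z (n / k) = z' (n' / k)) (h2 : n % k = n' % k) : agg k z n = agg k z' n' := by
  unfold agg
  rw [dif_pos hk, dif_pos hk, Int.fdiv_eq_ediv_of_nonneg _ (by omega),
    Int.fdiv_eq_ediv_of_nonneg _ (by omega), h1]
  congr 1
  exact Fin.ext (by simp only [h2])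

lemma agg_periodic {k : ℕ} (hk : 0 < k) {z : ℤ → (Fin k → ℝ)} {P : ℕ}
    (hz : ∀ j : ℤ, z (j + (P : ℤ)) = z j) (n : ℤ) :
    agg k z (n + ((P * k : ℕ) : ℤ)) = agg k z n := by
  have hk' : (k : ℤ) ≠ 0 := by exact_mod_cast hk.ne'
  refine agg_congr hk ?_ ?_
  · push_cast
    rw [Int.add_mul_ediv_right _ _ hk', hz]
  · push_cast
    rw [Int.add_mul_emod_self_right]

lemma perExt_periodic {α : Type*} [Zero α] {m : ℕ} (w : Fin m → α) (n : ℤ) :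
    perExt w (n + (m : ℤ)) = perExt w n := by
  simp only [perExt, Int.add_emod_right]

lemma perExt_mem {k l : ℕ} (hl : 0 < l) {Y : Set (Fin k → ℝ)} {y : Fin l → (Fin k → ℝ)}
    (hy : ∀ i, y i ∈ Y) (n : ℤ) : perExt y n ∈ Y := by
  simp only [perExt, dif_pos hl, hy]

lemma eq_emod {α : Type*} {x : ℤ → α} {p : ℕ} (hper : ∀ j : ℤ, x (j + (p : ℤ)) = x j) (j : ℤ) :
    x (j % p) = x j := by
  have hp : Function.Periodic x (p : ℤ) := hper
  have := hp.int_mul (j / p) (j % p)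
  rw [← this]
  congr 1
  have := Int.emod_add_mul_ediv j p
  simp only [Int.cast_id]
  linarith

lemma perExt_word {k p : ℕ} (hp : 0 < p) {x : ℤ → (Fin k → ℝ)}
    (hper : ∀ j : ℤ, x (j + (p : ℤ)) = x j) (j : ℤ) :
    perExt (fun i : Fin p => x i) j = x j := by
  simp only [perExt, dif_pos hp]
  rw [Int.toNat_of_nonneg (Int.emod_nonneg _ (by omega)), eq_emod hper]

/-- By compactness, finitely many periodic sequences near `x` open gaps at all energies of `K`. -/
lemma exists_cover {k : ℕ} (hk : 0 < k) {Y : Set (Fin k → ℝ)} {S : Set ℝ} (hGR : GapRich k Y S)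
    {x : ℤ → (Fin k → ℝ)} (hxY : ∀ j, x j ∈ Y) {p : ℕ} (hp : 0 < p)
    (hper : ∀ j : ℤ, x (j + (p : ℤ)) = x j) {ε : ℝ} (hε : 0 < ε) {K : Set ℝ}
    (hKc : IsCompact K) (hKS : K ⊆ Sᶜ) :
    ∃ (m : ℕ) (w : Fin m → ℤ → (Fin k → ℝ)) (c : ℝ), 0 < c ∧ (∀ i j, w i j ∈ Y) ∧
      (∀ i j, dist (x j) (w i j) < ε) ∧ ∀ E ∈ K, ∃ i, LowerBd (agg k (w i)) E c := by
  have h1 : ∀ E : ℝ, ∃ (z : ℤ → (Fin k → ℝ)) (c : ℝ), 0 < c ∧ (E ∈ K → (∀ j, z j ∈ Y) ∧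
      (∀ j, dist (x j) (z j) < ε) ∧ BddPot (agg k z) ∧ LowerBd (agg k z) E c) := by
    intro E
    by_cases hE : E ∈ K
    · obtain ⟨l, hl, y, hy1, hy2, hy3⟩ :=
        hGR.2 E (hKS hE) p hp (fun i => x i) (fun i => hxY _) ε hε
      have hb : BddPot (agg k (perExt y)) :=
        BddPot.of_periodic (Nat.mul_pos hl hk) (agg_periodic hk (perExt_periodic y))
      obtain ⟨c, hc, hlow⟩ := exists_lowerBd hb hy3
      refine ⟨perExt y, c, hc, fun _ => ⟨perExt_mem hl hy1, fun j => ?_, hb, hlow⟩⟩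
      have := hy2 j
      rwa [perExt_word hp hper] at this
    · exact ⟨x, 1, one_pos, fun h => absurd h hE⟩
  choose z c hc hz using h1
  obtain ⟨T, hTK, hT⟩ := hKc.elim_nhds_subcover (fun E => {E' | (E' - E) ^ 2 < c E / 4})
    (fun E _ => by
      refine IsOpen.mem_nhds (isOpen_lt (by fun_prop) continuous_const) ?_
      have := hc E
      simp only [mem_ofPred_eq, sub_self]
      norm_num
      exact this)
  obtain ⟨c₀, hc₀, hc₀'⟩ : ∃ c₀ : ℝ, 0 < c₀ ∧ ∀ E ∈ T, c₀ ≤ c E / 4 := by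
    have hev : ∀ᶠ c₀ in nhdsWithin (0 : ℝ) (Ioi 0), ∀ E ∈ T, c₀ ≤ c E / 4 := by
      rw [Finset.eventually_all]
      intro E _
      have h4 : 0 < c E / 4 := by have := hc E; positivity
      filter_upwards [Ioc_mem_nhdsGT h4] with d hd using hd.2
    obtain ⟨d, hd1, hd2⟩ := (hev.and self_mem_nhdsWithin).exists
    exact ⟨d, hd2, hd1⟩
  refine ⟨T.card, fun i => z (T.equivFin.symm i), c₀, hc₀,
    fun i => (hz _ (hTK _ (T.equivFin.symm i).2)).1,
    fun i => (hz _ (hTK _ (T.equivFin.symm i).2)).2.1, fun E hE => ?_⟩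
  obtain ⟨E₀, hE₀, hEE⟩ := mem_iUnion₂.1 (hT hE)
  refine ⟨T.equivFin ⟨E₀, hE₀⟩, ?_⟩
  simp only [Equiv.symm_apply_apply]
  obtain ⟨-, -, hb, hlow⟩ := hz E₀ (hTK _ hE₀)
  exact (hlow.near hb (le_of_lt hEE)).mono (hc₀' _ hE₀)

/-- The `P`-periodic sequence that on `[0, P)` runs through `M` consecutive entries of each `w i` in
turn, each `w i` being read at its own position, and follows `x` on the remaining sites. -/
def concat {α : Type*} {m : ℕ} (w : Fin m → ℤ → α) (x : ℤ → α) (P M : ℕ) : ℤ → α := fun j =>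
  if h : (j % (P : ℤ)).toNat / M < m then w ⟨(j % (P : ℤ)).toNat / M, h⟩ (j % (P : ℤ))
  else x (j % (P : ℤ))

lemma concat_block {α : Type*} {m : ℕ} (w : Fin m → ℤ → α) (x : ℤ → α) {P M : ℕ}
    (hP : m * M ≤ P) (i : Fin m) {j : ℤ} (h1 : (i : ℤ) * M ≤ j) (h2 : j < (i + 1) * M) :
    concat w x P M j = w i j := by
  have h0 : (0 : ℤ) ≤ (i : ℤ) * M := by positivity
  have h3 : ((i : ℤ) + 1) * M ≤ P := by
    have : ((i : ℕ) + 1) * M ≤ m * M := Nat.mul_le_mul_right _ i.2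
    exact_mod_cast this.trans hP
  have h4 : j % (P : ℤ) = j := Int.emod_eq_of_lt (by omega) (by omega)
  have h5 : j.toNat / M = i := by
    lift j to ℕ using by omega
    rw [Int.toNat_natCast]
    refine Nat.div_eq_of_lt_le ?_ ?_
    · exact_mod_cast h1
    · exact_mod_cast h2
  unfold concat
  simp only [h4, h5]
  rw [dif_pos i.2]

lemma exists_exp_bound {C s : ℝ} (hC : 0 ≤ C) (hs0 : 0 < s) (hs1 : s < 1) {d : ℕ} (hd : 0 < d) :
    ∃ N₀ : ℕ, ∃ c₀ : ℝ, 0 < c₀ ∧ ∀ N : ℕ, N₀ ≤ N →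
      C * N * s ^ (N / d) ≤ Real.exp (-(c₀ * N)) := by
  set r := Real.sqrt s with hr
  have hr0 : 0 < r := Real.sqrt_pos.2 hs0
  have hr1 : r < 1 := by rw [hr, Real.sqrt_lt' one_pos]; simpa using hs1
  have hlog : Real.log r < 0 := Real.log_neg hr0 hr1
  have hdR : (0 : ℝ) < d := by exact_mod_cast hd
  have ht := (tendsto_pow_const_mul_const_pow_of_abs_lt_one 1
    (show |r| < 1 by rwa [abs_of_pos hr0])).const_mul (C * (2 * d))
  rw [mul_zero] at ht
  obtain ⟨t₀, ht₀⟩ := Filter.eventually_atTop.1 (ht.eventually (gt_mem_nhds one_pos))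
  refine ⟨d * (t₀ + 1), -Real.log r / (2 * d), by have := neg_pos.2 hlog; positivity,
    fun N hN => ?_⟩
  have h1 : t₀ + 1 ≤ N / d := (Nat.le_div_iff_mul_le hd).2 (by rwa [mul_comm])
  set t := N / d with htd
  have h2 : N ≤ 2 * d * t := by
    have := Nat.lt_div_mul_add (a := N) hd
    rw [← htd] at this
    nlinarith
  have h2' : (N : ℝ) ≤ 2 * d * t := by exact_mod_cast h2
  have h3 := ht₀ t (by omega)
  rw [pow_one] at h3
  calc C * N * s ^ t ≤ C * (2 * d * t) * s ^ t := by gcongr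
    _ = (C * (2 * d) * (t * r ^ t)) * r ^ t := by
      rw [← Real.sq_sqrt hs0.le, ← hr]; ring
    _ ≤ 1 * r ^ t := by gcongr
    _ = Real.exp (t * Real.log r) := by
      rw [one_mul, Real.exp_nat_mul, Real.exp_log hr0]
    _ ≤ _ := by
      rw [Real.exp_le_exp, neg_div, neg_mul, neg_neg, div_mul_eq_mul_div,
        le_div_iff₀ (by positivity)]
      nlinarith

/-- Thin spectra for periodic approximants: if `Y ⊆ ℝ^k` is a closed perfect
gap-rich set with exceptional set `S`, then any periodic `x` of minimal period
`p` can be `ε`-approximated by `Np`-periodic `y` with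
`Leb(K ∩ σ(H_y)) ≤ e^{-c₀N}` for all large `N`, for compact `K ⊆ ℝ∖S`. -/
theorem thin_spectrum_periodic (k : ℕ) (hk : 0 < k)
    (Y : Set (Fin k → ℝ)) (hY : Perfect Y) (S : Set ℝ) (hGR : GapRich k Y S)
    (x : ℤ → (Fin k → ℝ)) (hxY : ∀ j, x j ∈ Y)
    (p : ℕ) (hp : 0 < p) (hper : ∀ j : ℤ, x (j + (p : ℤ)) = x j)
    (hmin : ∀ q : ℕ, 0 < q → (∀ j : ℤ, x (j + (q : ℤ)) = x j) → p ≤ q)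
    (ε : ℝ) (hε : 0 < ε) (K : Set ℝ) (hKc : IsCompact K) (hKS : K ⊆ Sᶜ) :
    ∃ N₀ : ℕ, ∃ c₀ : ℝ, 0 < c₀ ∧
      ∀ N : ℕ, N₀ ≤ N →
        ∃ y : ℤ → (Fin k → ℝ),
          (∀ j, y j ∈ Y) ∧
          (∀ j : ℤ, y (j + ((N * p : ℕ) : ℤ)) = y j) ∧
          (∀ j : ℤ, dist (x j) (y j) < ε) ∧
          volume (K ∩ SchrodingerSpectrum (agg k y)) ≤
            ENNReal.ofReal (Real.exp (-(c₀ * N))) := by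
  obtain ⟨m, w, c, hc, hwY, hwx, hwK⟩ := exists_cover hk hGR hxY hp hper hε hKc hKS
  set θ : ℝ := (1 + c / 2)⁻¹ with hθ
  have hθ0 : 0 < θ := by positivity
  have hθ1 : θ < 1 := inv_lt_one_of_one_lt₀ (by linarith)
  have hs0 : 0 < Real.sqrt θ := Real.sqrt_pos.2 hθ0
  have hs1 : Real.sqrt θ < 1 := by rw [Real.sqrt_lt' one_pos]; simpa using hθ1
  obtain ⟨N₁, c₀, hc₀, hN₁⟩ := exists_exp_bound (C := 4 * m * p * k) (by positivity) hs0 hs1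
    (d := 7 * (m + 1)) (by omega)
  refine ⟨N₁ + 7 * (m + 1), c₀, hc₀, fun N hN => ?_⟩
  set t := N / (7 * (m + 1)) with ht
  -- `m` blocks of length `4 t + 3` fit into `N` sites.
  have ht1 : 1 ≤ t := (Nat.le_div_iff_mul_le (by omega)).2 (by omega)
  have htN : m * (4 * t + 3) ≤ N := by
    have := Nat.div_mul_le_self N (7 * (m + 1))
    rw [← ht] at this
    nlinarith
  have hNP : N ≤ N * p := Nat.le_mul_of_pos_right N hp
  set P := N * p with hP
  have hxP : ∀ j : ℤ, x (j + (P : ℤ)) = x j := by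
    intro j
    have hpx : Function.Periodic x (p : ℤ) := hper
    have := hpx.int_mul N j
    simpa [hP] using this
  set y := concat w x P (4 * t + 3) with hy
  have hyper : ∀ j : ℤ, y (j + (P : ℤ)) = y j := by
    intro j
    simp only [hy, concat, Int.add_emod_right]
  refine ⟨y, fun j => ?_, hyper, fun j => ?_, ?_⟩
  · simp only [hy, concat]
    split_ifs
    · exact hwY _ _
    · exact hxY _
  · rw [← eq_emod hxP j]
    simp only [hy, concat]
    split_ifs
    · exact hwx _ _
    · rwa [dist_self]
  set V := agg k y with hV
  have hVper := agg_periodic hk hyper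
  rw [← hV] at hVper
  set q := P * k with hq
  have hPq : P ≤ q := Nat.le_mul_of_pos_right P hk
  set δ : ℝ := 2 * Real.sqrt θ ^ t with hδ
  have hδ0 : 0 ≤ δ := by positivity
  have hδ2 : δ ^ 2 = 4 * θ ^ t := by
    rw [hδ, mul_pow, ← pow_mul, mul_comm t 2, pow_mul, Real.sq_sqrt hθ0.le]
    norm_num
  -- The centre of the window inside the `i`-th block.
  let a : Fin m → ℤ := fun i => i * (4 * t + 3 : ℕ) * k + (2 * t + 1 : ℕ)
  have hsub : K ∩ SchrodingerSpectrum V ⊆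
      ⋃ i : Fin m, ⋃ l : Fin q, Metric.closedBall (cutEig V (a i) q l) δ := by
    rintro E ⟨hEK, hEs⟩
    obtain ⟨i, hi⟩ := hwK E hEK
    by_contra hcon
    simp only [mem_iUnion, Metric.mem_closedBall, not_exists, not_le, Real.dist_eq] at hcon
    have hm : 4 * t + 3 ≤ m * (4 * t + 3) := Nat.le_mul_of_pos_left _ (by have := i.2; omega)
    have hlow := lowerBd_of_window hVper hc hi (a i) t (by omega) (fun n h1 h2 => ?_) hδ0 hδ2
      (fun l => (hcon i l).le)
    · refine not_mem_spectrum_s11 (BddPot.of_periodic (by omega) hVper) ?_ hlow hEs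
      positivity
    · refine agg_congr hk ?_ rfl
      have hkz : (0 : ℤ) < k := by exact_mod_cast hk
      have h1' : (i : ℤ) * (4 * t + 3 : ℕ) * k ≤ n := by simp only [a] at h1; linarith
      have h2' : n < (i : ℤ) * (4 * t + 3 : ℕ) * k + (4 * t + 3 : ℕ) := by
        simp only [a] at h2; push_cast at *; linarith
      refine concat_block w x (htN.trans hNP) i ?_ ?_
      · exact (Int.le_ediv_iff_mul_le hkz).2 h1'
      · rw [Int.ediv_lt_iff_lt_mul hkz]
        push_cast at *
        nlinarith
  calc volume (K ∩ SchrodingerSpectrum V)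
      ≤ volume (⋃ i : Fin m, ⋃ l : Fin q, Metric.closedBall (cutEig V (a i) q l) δ) :=
        measure_mono hsub
    _ ≤ ∑ i : Fin m, ∑ l : Fin q, volume (Metric.closedBall (cutEig V (a i) q l) δ) :=
        (measure_iUnion_fintype_le _ _).trans
          (Finset.sum_le_sum fun i _ => measure_iUnion_fintype_le _ _)
    _ = ENNReal.ofReal (m * q * (2 * δ)) := by
        simp only [Real.volume_closedBall, Finset.sum_const, Finset.card_univ, Fintype.card_fin,
          nsmul_eq_mul]
        rw [ENNReal.ofReal_mul (p := (m : ℝ) * q) (by positivity),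
          ENNReal.ofReal_mul (p := (m : ℝ)) (by positivity), ENNReal.ofReal_natCast,
          ENNReal.ofReal_natCast, mul_assoc]
    _ ≤ ENNReal.ofReal (Real.exp (-(c₀ * N))) := by
        refine ENNReal.ofReal_le_ofReal ((le_of_eq ?_).trans (hN₁ N (by omega)))
        rw [hδ, hq, hP]
        push_cast
        ring
end
end
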